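/- arXiv:0803.4252 — 2 statements merged into one kernel-verified Lean document; each statement's English description precedes it below -/
import Mathlib

section
/- Let (X, d) be a compact metric space. The family of pseudometrics d̂_n, n ∈ ℕ, separates the points of I(X): if μ, ν ∈ I(X) and μ ≠ ν, then there exists n ∈ ℕ such that d̂_n(μ, ν) > 0. -/
/-!
An idempotent measure is monotone and commutes with adding constants, hence is `1`-Lipschitz for
the sup norm. By the lattice form of the Stone–Weierstrass theorem the Lipschitz functions are
dense in `C(X, ℝ)`, so distinct continuous functionals already differ at some `n`-Lipschitz
function. The supremum defining `dHat` is finite: `|μ φ - ν φ|` does not change when a constant is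
added to `φ`, and the `n`-Lipschitz functions vanishing at a base point are compact by
Arzelà–Ascoli. Were it infinite, `sSup` would take the junk value `0`.
-/

/-- An idempotent (Maslov) probability measure on a topological space `X` is a functional
`μ : C(X, ℝ) → ℝ` that is normalized on constants, shifts under addition of constants, and
turns pointwise maxima into maxima. -/
def IsIdemMeasure {X : Type*} [TopologicalSpace X] (μ : C(X, ℝ) → ℝ) : Prop :=
  (∀ c : ℝ, μ (ContinuousMap.const X c) = c) ∧
  (∀ (c : ℝ) (φ : C(X, ℝ)), μ (ContinuousMap.const X c + φ) = c + μ φ) ∧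
  (∀ φ ψ : C(X, ℝ), μ (φ ⊔ ψ) = max (μ φ) (μ ψ))

/-- The space `I(X)` of idempotent probability measures on `X`; as a subtype of the product
`(C(X, ℝ) → ℝ)` it automatically carries the weak* (pointwise convergence) topology. -/
abbrev IdemMeasure (X : Type*) [TopologicalSpace X] :=
  {μ : C(X, ℝ) → ℝ // IsIdemMeasure μ}

/-- `n-LIP(X, d)`: the continuous functions that are Lipschitz with constant `n`. -/
def nLip (X : Type*) [MetricSpace X] (n : ℕ) : Set C(X, ℝ) :=
  {φ | ∀ x y : X, |φ x - φ y| ≤ (n : ℝ) * dist x y}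

/-- The pseudometric `d̂ₙ(μ, ν) = sup { |μ(φ) − ν(φ)| : φ ∈ n-LIP(X, d) }`. -/
noncomputable def dHat {X : Type*} [MetricSpace X] (n : ℕ) (μ ν : C(X, ℝ) → ℝ) : ℝ :=
  sSup {r : ℝ | ∃ φ ∈ nLip X n, r = |μ φ - ν φ|}

/-- A functional on `C(X, ℝ)` is weakly additive if it commutes with adding real constants. -/
def IsWeaklyAdditive {X : Type*} [TopologicalSpace X] (μ : C(X, ℝ) → ℝ) : Prop :=
  ∀ (c : ℝ) (φ : C(X, ℝ)), μ (ContinuousMap.const X c + φ) = c + μ φ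

section WeaklyAdditive

variable {X : Type*} [TopologicalSpace X] {μ : C(X, ℝ) → ℝ}

theorem IsWeaklyAdditive.nonempty (hμ : IsWeaklyAdditive μ) : Nonempty X := by
  by_contra hX
  have : IsEmpty X := not_nonempty_iff.mp hX
  have h : μ 0 = 1 + μ 0 := by
    rw [← hμ 1 0, Subsingleton.elim (ContinuousMap.const X 1 + 0) 0]
  linarith

theorem IsWeaklyAdditive.lipschitzWith_one_of_monotone [CompactSpace X]
    (hμ : IsWeaklyAdditive μ) (hmono : Monotone μ) : LipschitzWith 1 μ := by
  refine LipschitzWith.of_le_add fun φ ψ ↦ ?_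
  have hle : φ ≤ ContinuousMap.const X (dist φ ψ) + ψ := ContinuousMap.le_def.mpr fun x ↦
    sub_le_iff_le_add.mp <| (le_abs_self (φ x - ψ x)).trans <|
      ContinuousMap.dist_apply_le_dist (f := φ) (g := ψ) x
  calc μ φ ≤ μ (ContinuousMap.const X (dist φ ψ) + ψ) := hmono hle
    _ = μ ψ + dist φ ψ := by rw [hμ, add_comm]

theorem IsIdemMeasure.isWeaklyAdditive (hμ : IsIdemMeasure μ) : IsWeaklyAdditive μ :=
  hμ.2.1

theorem IsIdemMeasure.monotone (hμ : IsIdemMeasure μ) : Monotone μ := fun φ ψ hφψ ↦ by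
  rw [← sup_eq_right.mpr hφψ, hμ.2.2]
  exact le_max_left _ _

theorem IsIdemMeasure.continuous [CompactSpace X] (hμ : IsIdemMeasure μ) : Continuous μ :=
  (hμ.isWeaklyAdditive.lipschitzWith_one_of_monotone hμ.monotone).continuous

end WeaklyAdditive

section Lipschitz

variable {X : Type*} [MetricSpace X]

theorem mem_nLip_iff_lipschitzWith {n : ℕ} {φ : C(X, ℝ)} :
    φ ∈ nLip X n ↔ LipschitzWith n φ := by
  simp only [nLip, Set.mem_ofPred_eq, lipschitzWith_iff_dist_le_mul, Real.dist_eq,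
    NNReal.coe_natCast]

theorem const_add_mem_nLip {n : ℕ} {φ : C(X, ℝ)} (hφ : φ ∈ nLip X n) (c : ℝ) :
    ContinuousMap.const X c + φ ∈ nLip X n := fun x y ↦ by
  simpa only [ContinuousMap.add_apply, ContinuousMap.const_apply, add_sub_add_left_eq_sub]
    using hφ x y

variable (X) in
theorem separatesPointsStrongly_lipschitzWith :
    {φ : C(X, ℝ) | ∃ K, LipschitzWith K φ}.SeparatesPointsStrongly := by
  intro v x y
  obtain rfl | hxy := eq_or_ne x y
  · exact ⟨.const X (v x), ⟨0, LipschitzWith.const (v x)⟩, rfl, rfl⟩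
  have hlip : LipschitzWith _ fun z ↦ v x + ((v y - v x) / dist x y) • dist x z :=
    (LipschitzWith.const (v x)).add ((lipschitzWith_smul _).comp (LipschitzWith.dist_right x))
  refine ⟨⟨_, hlip.continuous⟩, ⟨_, hlip⟩, ?_, ?_⟩
  · simp only [ContinuousMap.coe_mk, dist_self, smul_zero, add_zero]
  · simp only [ContinuousMap.coe_mk, smul_eq_mul,
      div_mul_cancel₀ _ (dist_ne_zero.mpr hxy), add_sub_cancel]

variable (X) in
theorem dense_iUnion_nLip [CompactSpace X] : Dense (⋃ n, nLip X n) := by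
  have hdense : Dense {φ : C(X, ℝ) | ∃ K, LipschitzWith K φ} :=
    dense_iff_closure_eq.mpr <| ContinuousMap.sublattice_closure_eq_top _
      ⟨0, 0, LipschitzWith.const (0 : ℝ)⟩
      (fun _ ⟨_, hφ⟩ _ ⟨_, hψ⟩ ↦ ⟨_, hφ.min hψ⟩)
      (fun _ ⟨_, hφ⟩ _ ⟨_, hψ⟩ ↦ ⟨_, hφ.max hψ⟩)
      (separatesPointsStrongly_lipschitzWith X)
  refine hdense.mono ?_
  rintro φ ⟨K, hφ⟩
  obtain ⟨n, hn⟩ := exists_nat_ge K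
  exact Set.mem_iUnion_of_mem n (mem_nLip_iff_lipschitzWith.mpr (hφ.weaken hn))

theorem isCompact_nLip_inter_apply_eq_zero (n : ℕ) (x₀ : X) :
    IsCompact (nLip X n ∩ {φ | φ x₀ = 0}) := by
  apply ArzelaAscoli.isCompact_of_equicontinuous
  · have himage : ContinuousMap.toFun '' (nLip X n ∩ {φ | φ x₀ = 0}) =
        {f : X → ℝ | LipschitzWith n f ∧ f x₀ = 0} := by
      ext f
      constructor
      · rintro ⟨φ, ⟨hφ, hφ₀⟩, rfl⟩
        exact ⟨mem_nLip_iff_lipschitzWith.mp hφ, hφ₀⟩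
      · rintro ⟨hf, hf₀⟩
        exact ⟨⟨f, hf.continuous⟩, ⟨mem_nLip_iff_lipschitzWith.mpr hf, hf₀⟩, rfl⟩
    have hclosed : IsClosed {f : X → ℝ | LipschitzWith n f ∧ f x₀ = 0} :=
      (isClosed_setOfPred_lipschitzWith n).inter
        (isClosed_eq (continuous_apply x₀) continuous_const)
    rw [himage]
    refine (isCompact_univ_pi fun x ↦
      isCompact_closedBall (0 : ℝ) (n * dist x x₀)).of_isClosed_subset hclosed ?_
    rintro f ⟨hf, hf₀⟩ x -
    simpa only [Metric.mem_closedBall, hf₀, NNReal.coe_natCast] using hf.dist_le_mul x x₀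
  · exact (LipschitzWith.uniformEquicontinuous _ n fun φ ↦
      mem_nLip_iff_lipschitzWith.mp φ.2.1).equicontinuous

end Lipschitz

section Separation

variable {X : Type*} [MetricSpace X] {μ ν : C(X, ℝ) → ℝ}

theorem bddAbove_abs_sub_nLip (hμ : IsWeaklyAdditive μ) (hν : IsWeaklyAdditive ν)
    (hμc : Continuous μ) (hνc : Continuous ν) (n : ℕ) :
    BddAbove {r : ℝ | ∃ φ ∈ nLip X n, r = |μ φ - ν φ|} := by
  obtain ⟨x₀⟩ := hμ.nonempty
  refine ((isCompact_nLip_inter_apply_eq_zero n x₀).bddAbove_image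
    (hμc.sub hνc).abs.continuousOn).mono ?_
  rintro _ ⟨φ, hφ, rfl⟩
  refine ⟨.const X (-φ x₀) + φ, ⟨const_add_mem_nLip hφ _, neg_add_cancel (φ x₀)⟩, ?_⟩
  simp only [Pi.sub_apply, hμ (-φ x₀) φ, hν (-φ x₀) φ, add_sub_add_left_eq_sub]

theorem exists_mem_nLip_map_ne [CompactSpace X] (hμc : Continuous μ) (hνc : Continuous ν)
    (hne : μ ≠ ν) : ∃ n, ∃ φ ∈ nLip X n, μ φ ≠ ν φ := by
  by_contra! heq
  exact hne <| hμc.ext_on (dense_iUnion_nLip X) hνc fun φ hφ ↦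
    let ⟨n, hφn⟩ := Set.mem_iUnion.mp hφ
    heq n φ hφn

theorem statement2_general [CompactSpace X] (hμ : IsWeaklyAdditive μ) (hν : IsWeaklyAdditive ν)
    (hμc : Continuous μ) (hνc : Continuous ν) (hne : μ ≠ ν) : ∃ n : ℕ, 0 < dHat n μ ν := by
  obtain ⟨n, φ, hφ, hφne⟩ := exists_mem_nLip_map_ne hμc hνc hne
  have hle : |μ φ - ν φ| ≤ dHat n μ ν :=
    le_csSup (bddAbove_abs_sub_nLip hμ hν hμc hνc n) ⟨φ, hφ, rfl⟩
  exact ⟨n, (abs_sub_pos.mpr hφne).trans_le hle⟩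

end Separation

/-- The family of pseudometrics `d̂ₙ`, `n ∈ ℕ`, separates the points of
`I(X)`: distinct idempotent probability measures have positive `d̂ₙ`-distance for some `n`. -/
theorem statement2 {X : Type*} [MetricSpace X] [CompactSpace X]
    (μ ν : C(X, ℝ) → ℝ) (hμ : IsIdemMeasure μ) (hν : IsIdemMeasure ν) (hne : μ ≠ ν) :
    ∃ n : ℕ, 0 < dHat n μ ν := by
  exact statement2_general hμ.isWeaklyAdditive hν.isWeaklyAdditive hμ.continuous hν.continuous hne
end

section
/- There exist infinite compact metrizable spaces X and Y and a continuous open surjection f : X → Y such that every fiber f⁻¹(y), y ∈ Y, is infinite, and yet the induced map I(f) : I(X) → I(Y) is not a trivial Q-bundle: there is no homeomorphism H : I(X) → I(Y) × Q, where Q = ∏_{i=1}^∞ [0, 1] is the Hilbert cube, such that pr₁ ∘ H = I(f) (pr₁ being the projection I(Y) × Q → I(Y)). -/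
/-- The pushforward `I(f) : I(X) → I(Y)` of functionals along a continuous map `f : X → Y`,
`I(f)(μ)(φ) = μ(φ ∘ f)`. -/
def pushF {X Y : Type*} [TopologicalSpace X] [TopologicalSpace Y] (f : C(X, Y))
    (μ : C(X, ℝ) → ℝ) : C(Y, ℝ) → ℝ :=
  fun φ => μ (φ.comp f)

/-!
Sections of `I(f)` over the Dirac measures cannot be disjoint as soon as every continuous function
on `X` is constant on some fiber of `f`: apply this to the difference of the values that two
sections take at the cone functions of slope `n` with apex `x`, which approximate all functions as
`n` grows. A trivial `Q`-bundle, however, has disjoint sections.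

A map with this property is the quotient of the product of the spheres of dimensions `1, 2, 4, …`
by the antipodal actions on the factors. On the first `k` factors, a function is constant on an
orbit when its Fourier coefficients along the orbit at all nontrivial characters of the group
`{±1} ^ k` vanish. There are `2 ^ i` characters with largest index `i`, as many as the dimension of
the `i`-th sphere, and the cohomology ring of a product of projective spaces shows that the product
of the corresponding linear forms over `𝔽₂` is the top class, so the coefficients have a common
zero. This Borsuk–Ulam theorem is proved by a count modulo two on a grid on a torus, on which the
antipodal actions lift through spherical coordinates. Compactness then lets `k` tend to infinity.
-/

namespace IdemMeasure

/-- The Dirac measure at `y`. -/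
def dirac {Y : Type*} [TopologicalSpace Y] (y : Y) : IdemMeasure Y :=
  ⟨fun φ => φ y, fun _ => rfl, fun _ _ => rfl, fun _ _ => rfl⟩

lemma continuous_dirac {Y : Type*} [TopologicalSpace Y] : Continuous (dirac : Y → IdemMeasure Y) :=
  (continuous_pi fun φ => φ.continuous).subtype_mk _

/-- The inverted cone with apex `x` and slope `n`. Shifts of steep cones approximate all continuous
functions from above. -/
def cone {X : Type*} [PseudoMetricSpace X] (n : ℕ) (x : X) : C(X, ℝ) :=
  ⟨fun z => -(n * dist x z), by fun_prop⟩

lemma continuous_cone {X : Type*} [PseudoMetricSpace X] (n : ℕ) :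
    Continuous (cone n : X → C(X, ℝ)) :=
  ContinuousMap.continuous_of_continuous_uncurry _ <| by
    change Continuous fun p : X × X => -(n * dist p.1 p.2)
    fun_prop

lemma exists_forall_add_cone_le {X : Type*} [PseudoMetricSpace X] [CompactSpace X] (φ : C(X, ℝ))
    {ε : ℝ} (hε : 0 < ε) : ∃ N, ∀ n ≥ N, ∀ x z, φ x + cone n x z ≤ φ z + ε := by
  obtain ⟨δ, hδ, hφδ⟩ := Metric.uniformContinuous_iff.1
    (CompactSpace.uniformContinuous_of_continuous φ.continuous) ε hε
  obtain ⟨N, hN⟩ := exists_nat_gt (2 * ‖φ‖ / δ)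
  refine ⟨N, fun n hn x z => ?_⟩
  change φ x + -(n * dist x z) ≤ φ z + ε
  rcases lt_or_ge (dist x z) δ with hxz | hxz
  · have := (le_abs_self _).trans_lt (hφδ hxz)
    have : 0 ≤ n * dist x z := by positivity
    linarith
  · have := (le_abs_self _).trans (φ.dist_le_two_norm x z)
    have : 2 * ‖φ‖ ≤ n * dist x z := ((div_lt_iff₀ hδ).1 hN).le.trans (by gcongr)
    linarith

end IdemMeasure

namespace IsIdemMeasure

open IdemMeasure

section Order

variable {X : Type*} [TopologicalSpace X] {μ : C(X, ℝ) → ℝ} {φ ψ : C(X, ℝ)}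

lemma mono (hμ : IsIdemMeasure μ) (h : φ ≤ ψ) : μ φ ≤ μ ψ := by
  rw [← sup_eq_right.2 h, hμ.2.2]
  exact le_max_left _ _

lemma le_add (hμ : IsIdemMeasure μ) {c : ℝ} (h : ∀ x, φ x ≤ c + ψ x) : μ φ ≤ c + μ ψ := by
  rw [← hμ.2.1]
  exact hμ.mono h

lemma exists_apply_sup'_eq (hμ : IsIdemMeasure μ) {ι : Type*} {t : Finset ι} (ht : t.Nonempty)
    (ψ : ι → C(X, ℝ)) : ∃ i ∈ t, μ (t.sup' ht ψ) = μ (ψ i) := by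
  rw [Finset.apply_sup'_eq_sup'_comp ht μ hμ.2.2]
  exact Finset.exists_mem_eq_sup' ht (μ ∘ ψ)

lemma lipschitzWith [CompactSpace X] (hμ : IsIdemMeasure μ) : LipschitzWith 1 μ :=
  LipschitzWith.of_le_add fun φ ψ => by
    rw [add_comm]
    refine hμ.le_add fun x => ?_
    have := (le_abs_self _).trans ((φ - ψ).norm_coe_le_norm x)
    rw [ContinuousMap.sub_apply, ← dist_eq_norm] at this
    linarith

end Order

/-- Off the fiber, `ψ` can be raised above `φ` by a function pulled back from `Y`, whose value under
`μ` is its value at `y`. -/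
lemma le_of_le_on_fiber {X Y : Type*} [TopologicalSpace X] [CompactSpace X] [TopologicalSpace Y]
    [T4Space Y] {f : C(X, Y)} {y : Y} {μ : C(X, ℝ) → ℝ} (hμ : IsIdemMeasure μ)
    (hμy : pushF f μ = (dirac y).1) {φ ψ : C(X, ℝ)} (h : ∀ x, f x = y → φ x ≤ ψ x) :
    μ φ ≤ μ ψ := by
  refine le_of_forall_pos_le_add fun ε hε => ?_
  let K : Set X := {x | ψ x + ε ≤ φ x}
  have hK : IsClosed (f '' K) :=
    ((isClosed_le (by fun_prop) (by fun_prop)).isCompact.image f.continuous).isClosed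
  have hyK : Disjoint {y} (f '' K) := by
    rw [Set.disjoint_singleton_left]
    rintro ⟨x, hx, hxy⟩
    have : ψ x + ε ≤ φ x := hx
    linarith [h x hxy]
  obtain ⟨u, huy, huK, -⟩ := exists_continuous_zero_one_of_isClosed isClosed_singleton hK hyK
  let κ : C(Y, ℝ) := ContinuousMap.const Y (μ ψ) + (‖φ‖ + |μ ψ|) • u
  have hκy : μ (κ.comp f) = μ ψ := by
    refine (congrFun hμy κ).trans ?_
    change μ ψ + (‖φ‖ + |μ ψ|) * u y = μ ψ
    rw [huy rfl, Pi.zero_apply, mul_zero, add_zero]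
  have hφ : φ ≤ (ContinuousMap.const X ε + ψ) ⊔ κ.comp f := fun x => by
    change φ x ≤ (ε + ψ x) ⊔ κ (f x)
    rw [le_sup_iff]
    refine (le_or_gt (ψ x + ε) (φ x)).symm.imp (fun hx => ?_) fun hx => ?_
    · linarith
    · change φ x ≤ μ ψ + (‖φ‖ + |μ ψ|) * u (f x)
      rw [huK ⟨x, hx, rfl⟩, Pi.one_apply, mul_one]
      linarith [(le_abs_self _).trans (φ.norm_coe_le_norm x), neg_abs_le (μ ψ)]
  have := hμ.mono hφ
  rw [hμ.2.2, hμ.2.1, hκy] at this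
  exact this.trans (max_le (by linarith) (by linarith))

section Cones

variable {X Y : Type*} [PseudoMetricSpace X] [CompactSpace X] [TopologicalSpace Y] [T4Space Y]
  {f : C(X, Y)} {y : Y} {μ ν : C(X, ℝ) → ℝ} {φ : C(X, ℝ)} {n : ℕ} {c ε : ℝ}

lemma le_add_of_cone_le (hμ : IsIdemMeasure μ) (hν : IsIdemMeasure ν)
    (hμy : pushF f μ = (dirac y).1) (hy : y ∈ Set.range f)
    (hc : ∀ x, f x = y → μ (cone n x) ≤ c + ν (cone n x))
    (hφ : ∀ x z, φ x + cone n x z ≤ φ z + ε) : μ φ ≤ ν φ + c + ε := by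
  refine le_of_forall_pos_le_add fun δ hδ => ?_
  let ψ (x : X) : C(X, ℝ) := ContinuousMap.const X (φ x + δ) + cone n x
  have hfib : IsCompact (f ⁻¹' {y}) :=
    (isClosed_singleton.preimage f.continuous).isCompact
  obtain ⟨t, ht, hcov⟩ := hfib.elim_nhds_subcover (fun x => {z | φ z < ψ x z}) fun x _ => by
    refine (isOpen_lt (by fun_prop) (by fun_prop)).mem_nhds ?_
    change φ x < φ x + δ + -(n * dist x x)
    rw [dist_self]
    linarith
  have htne : t.Nonempty := by
    obtain ⟨x, hx⟩ := hy
    obtain ⟨i, hi, -⟩ := Set.mem_iUnion₂.1 (hcov hx)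
    exact ⟨i, hi⟩
  obtain ⟨x, hx, hμx⟩ := hμ.exists_apply_sup'_eq htne ψ
  have hνx : ν (cone n x) ≤ ε - φ x + ν φ := hν.le_add fun z => by linarith [hφ x z]
  calc μ φ ≤ μ (t.sup' htne ψ) := hμ.le_of_le_on_fiber hμy fun z hz => by
        obtain ⟨i, hi, hiz⟩ := Set.mem_iUnion₂.1 (hcov hz)
        exact hiz.le.trans (Finset.le_sup' ψ hi z)
    _ = φ x + δ + μ (cone n x) := by rw [hμx, hμ.2.1]
    _ ≤ ν φ + c + ε + δ := by linarith [hc x (ht x hx)]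

lemma abs_sub_le_of_cone_sub_eq (hμ : IsIdemMeasure μ) (hν : IsIdemMeasure ν)
    (hμy : pushF f μ = (dirac y).1) (hνy : pushF f ν = (dirac y).1) (hy : y ∈ Set.range f)
    (hc : ∀ x, f x = y → μ (cone n x) - ν (cone n x) = c)
    (hφ : ∀ x z, φ x + cone n x z ≤ φ z + ε) : |μ φ - ν φ| ≤ ε := by
  have hμν {ψ : C(X, ℝ)} {η : ℝ} (hψ : ∀ x z, ψ x + cone n x z ≤ ψ z + η) :
      μ ψ ≤ ν ψ + c + η :=
    hμ.le_add_of_cone_le hν hμy hy (fun x hx => by linarith [hc x hx]) hψ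
  have hνμ {ψ : C(X, ℝ)} {η : ℝ} (hψ : ∀ x z, ψ x + cone n x z ≤ ψ z + η) :
      ν ψ ≤ μ ψ + -c + η :=
    hν.le_add_of_cone_le hμ hνy hy (fun x hx => by linarith [hc x hx]) hψ
  -- Testing with the constant `0`, on which `μ` and `ν` agree, gives `c = 0`.
  have hzero (x z : X) : ContinuousMap.const X (0 : ℝ) x + cone n x z ≤
      ContinuousMap.const X (0 : ℝ) z + 0 := by
    change 0 + -(n * dist x z) ≤ 0 + 0
    have : 0 ≤ n * dist x z := by positivity
    linarith
  have h₁ := hμν hzero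
  have h₂ := hνμ hzero
  rw [hμ.1, hν.1] at h₁ h₂
  rw [abs_le]
  constructor <;> linarith [hμν hφ, hνμ hφ]

end Cones

end IsIdemMeasure

namespace IdemMeasure

lemma continuous_eval {X : Type*} [TopologicalSpace X] [CompactSpace X] :
    Continuous fun p : IdemMeasure X × C(X, ℝ) => p.1.1 p.2 :=
  continuous_prod_of_continuous_lipschitzWith' _ 1 (fun μ => μ.2.lipschitzWith)
    fun φ => (continuous_apply φ).comp continuous_subtype_val

section Sections

variable {X Y : Type*} [TopologicalSpace X] [CompactSpace X] [TopologicalSpace.MetrizableSpace X]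
  [TopologicalSpace Y] [CompactSpace Y] [T2Space Y] {f : C(X, Y)}

theorem exists_section_eq (hf : Function.Surjective f)
    (hconst : ∀ g : X → ℝ, Continuous g → ∃ y, ∃ c, ∀ x, f x = y → g x = c)
    {s t : Y → IdemMeasure X} (hs : Continuous s) (ht : Continuous t)
    (hfs : ∀ y, pushF f (s y).1 = (dirac y).1) (hft : ∀ y, pushF f (t y).1 = (dirac y).1) :
    ∃ y, s y = t y := by
  let _ : MetricSpace X := TopologicalSpace.metrizableSpaceMetric X
  have hcone {r : Y → IdemMeasure X} (hr : Continuous r) (n : ℕ) :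
      Continuous fun x => (r (f x)).1 (cone n x) :=
    continuous_eval.comp ((hr.comp f.continuous).prodMk (continuous_cone n))
  choose y c hy using fun n => hconst _ ((hcone hs n).sub (hcone ht n))
  have hlim (φ : C(X, ℝ)) :
      Filter.Tendsto (fun n => (s (y n)).1 φ - (t (y n)).1 φ) Filter.atTop (nhds 0) := by
    refine Metric.tendsto_atTop.2 fun ε hε => ?_
    obtain ⟨N, hN⟩ := exists_forall_add_cone_le φ (half_pos hε)
    refine ⟨N, fun n hn => ?_⟩
    rw [dist_zero_right]
    refine ((s (y n)).2.abs_sub_le_of_cone_sub_eq (c := c n) (t (y n)).2 (hfs _) (hft _) (hf _)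
      (fun x hx => ?_) (hN n hn)).trans_lt (half_lt_self hε)
    rw [← hy n x hx, Pi.sub_apply, hx]
  let F : Ultrafilter Y := (Filter.hyperfilter ℕ).map y
  have hF : Filter.Tendsto y (Filter.hyperfilter ℕ) (nhds F.lim) := F.le_nhds_lim
  refine ⟨F.lim, Subtype.ext (funext fun φ => sub_eq_zero.1 ?_)⟩
  have hdiff : Continuous fun y => (s y).1 φ - (t y).1 φ :=
    (continuous_eval.comp (hs.prodMk continuous_const)).sub
      (continuous_eval.comp (ht.prodMk continuous_const))
  exact tendsto_nhds_unique ((hdiff.tendsto _).comp hF)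
    ((hlim φ).mono_left Nat.hyperfilter_le_atTop)

theorem not_exists_trivialization {Q : Type*} [TopologicalSpace Q] [Nontrivial Q]
    (hf : Function.Surjective f)
    (hconst : ∀ g : X → ℝ, Continuous g → ∃ y, ∃ c, ∀ x, f x = y → g x = c) :
    ¬ ∃ H : IdemMeasure X ≃ₜ IdemMeasure Y × Q, ∀ μ, ((H μ).1).1 = pushF f μ.1 := by
  rintro ⟨H, hH⟩
  obtain ⟨p, q, hpq⟩ := exists_pair_ne Q
  have hcont (q : Q) : Continuous fun y => H.symm (dirac y, q) :=
    H.symm.continuous.comp (continuous_dirac.prodMk continuous_const)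
  have hpush (q : Q) (y : Y) : pushF f (H.symm (dirac y, q)).1 = (dirac y).1 := by
    rw [← hH, H.apply_symm_apply]
  obtain ⟨y, hy⟩ := exists_section_eq hf hconst (hcont p) (hcont q) (hpush p) (hpush q)
  exact hpq (congrArg Prod.snd (H.symm.injective hy))

end Sections

end IdemMeasure

namespace OrbitSpace

section ModTwoCount

variable {V G : Type*} {n : ℕ}

/-- A finite set of `n`-simplices with ordered vertices is a cycle modulo two: for each `l`, the
simplices are paired off so that partners share all vertices but the `l`-th one. -/
def IsModTwoCycle (S : Finset (Fin (n + 1) → V)) : Prop :=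
  ∀ l, ∃ φ : (Fin (n + 1) → V) → Fin (n + 1) → V, ∀ s ∈ S,
    φ s ∈ S ∧ φ s ≠ s ∧ φ (φ s) = s ∧ ∀ l' ≠ l, φ s l' = s l'

variable [Group G] [DecidableEq G]

/-- The cup product of the coboundaries of the functions `σ j`, evaluated on the simplices in `S`
whose initial vertex lies in the fundamental domain `{v | r v = 1}`. -/
def cupCount (S : Finset (Fin (n + 1) → V)) (r : V → G) (σ : Fin n → V → ZMod 2) : ZMod 2 :=
  ∑ s ∈ S with r (s 0) = 1, ∏ j, (σ j (s j.castSucc) + σ j (s j.succ))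

variable {S : Finset (Fin (n + 1) → V)} {r : V → G}

lemma prod_update_coboundary (σ : Fin n → V → ZMod 2) (j : Fin n) (τ : V → ZMod 2)
    (s : Fin (n + 1) → V) :
    ∏ i, (Function.update σ j τ i (s i.castSucc) + Function.update σ j τ i (s i.succ)) =
      (τ (s j.castSucc) + τ (s j.succ)) *
        ∏ i ∈ Finset.univ.erase j, (σ i (s i.castSucc) + σ i (s i.succ)) := by
  rw [← Finset.mul_prod_erase _ _ (Finset.mem_univ j), Function.update_self]
  congr 1
  refine Finset.prod_congr rfl fun i hi => ?_
  rw [Function.update_of_ne (Finset.ne_of_mem_erase hi)]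

lemma cupCount_update_add (σ : Fin n → V → ZMod 2) (j : Fin n) (τ τ' : V → ZMod 2) :
    cupCount S r (Function.update σ j (τ + τ')) =
      cupCount S r (Function.update σ j τ) + cupCount S r (Function.update σ j τ') := by
  simp only [cupCount, ← Finset.sum_add_distrib, prod_update_coboundary, ← add_mul, Pi.add_apply,
    add_add_add_comm]

lemma IsModTwoCycle.sum_eq_zero (hS : IsModTwoCycle S) {l m : Fin (n + 1)} (hlm : m ≠ l)
    {F : (Fin (n + 1) → V) → ZMod 2} (hF : ∀ s s', (∀ l' ≠ l, s l' = s' l') → F s = F s') :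
    ∑ s ∈ S with r (s m) = 1, F s = 0 := by
  obtain ⟨φ, hφ⟩ := hS l
  refine Finset.sum_involution (fun s _ => φ s) (fun s hs => ?_) (fun s hs _ => ?_)
    (fun s hs => ?_) fun s hs => ?_ <;> obtain ⟨hs, hr⟩ := Finset.mem_filter.1 hs
  · rw [hF (φ s) s (hφ s hs).2.2.2, CharTwo.add_self_eq_zero]
  · exact (hφ s hs).2.1
  · exact Finset.mem_filter.2 ⟨(hφ s hs).1, by rwa [(hφ s hs).2.2.2 m hlm]⟩
  · exact (hφ s hs).2.2.1

variable {ρ : G →* Equiv.Perm V}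

lemma sum_fundamentalDomain_eq (hr : ∀ g v, r (ρ g v) = g * r v)
    (hSρ : ∀ g, ∀ s ∈ S, ρ g ∘ s ∈ S) (m m' : Fin (n + 1)) {F : (Fin (n + 1) → V) → ZMod 2}
    (hF : ∀ g s, F (ρ g ∘ s) = F s) :
    ∑ s ∈ S with r (s m) = 1, F s = ∑ s ∈ S with r (s m') = 1, F s := by
  have inv (g : G) (s : Fin (n + 1) → V) : ρ g⁻¹ ∘ ρ g ∘ s = s := by
    funext l
    simp only [Function.comp_apply, map_inv, Equiv.Perm.inv_def, Equiv.symm_apply_apply]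
  refine Finset.sum_nbij' (fun s => ρ (r (s m'))⁻¹ ∘ s) (fun s => ρ (r (s m))⁻¹ ∘ s)
    ?_ ?_ ?_ ?_ fun s _ => (hF _ s).symm
  all_goals
    intro s hs
    obtain ⟨hs, h1⟩ := Finset.mem_filter.1 hs
  · exact Finset.mem_filter.2 ⟨hSρ _ s hs, by rw [Function.comp_apply, hr, inv_mul_cancel]⟩
  · exact Finset.mem_filter.2 ⟨hSρ _ s hs, by rw [Function.comp_apply, hr, inv_mul_cancel]⟩
  · simp only [Function.comp_apply, hr, h1, mul_one, inv]
  · simp only [Function.comp_apply, hr, h1, mul_one, inv]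

/-- Once the product of `n - 1` sums is expanded, each term depends on at most `n` of the `n + 1`
vertices, so it vanishes by pairing the simplices that differ in a remaining vertex. -/
lemma IsModTwoCycle.sum_mul_prod_erase_eq_zero (hS : IsModTwoCycle S) (σ : Fin n → V → ZMod 2)
    (j : Fin n) (m : Fin (n + 1)) (τ : V → ZMod 2) :
    ∑ s ∈ S with r (s m) = 1,
      τ (s m) * ∏ i ∈ Finset.univ.erase j, (σ i (s i.castSucc) + σ i (s i.succ)) = 0 := by
  simp_rw [Finset.prod_add, Finset.mul_sum]
  rw [Finset.sum_comm]
  refine Finset.sum_eq_zero fun T hT => ?_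
  let vertex (i : Fin n) : Fin (n + 1) := if i ∈ T then i.castSucc else i.succ
  have few : (insert m ((Finset.univ.erase j).image vertex)).card <
      (Finset.univ : Finset (Fin (n + 1))).card := by
    have := j.pos
    have := Finset.card_insert_le m ((Finset.univ.erase j).image vertex)
    have := Finset.card_image_le (s := Finset.univ.erase j) (f := vertex)
    simp only [Finset.card_erase_of_mem (Finset.mem_univ j), Finset.card_univ,
      Fintype.card_fin] at *
    omega
  obtain ⟨l, -, hl⟩ := Finset.exists_mem_notMem_of_card_lt_card few
  simp only [Finset.mem_insert, Finset.mem_image, not_or, not_exists, not_and] at hl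
  refine hS.sum_eq_zero (Ne.symm hl.1) fun s s' hss => ?_
  rw [hss m (Ne.symm hl.1)]
  congr 2 <;> refine Finset.prod_congr rfl fun i hi => ?_
  · rw [hss]
    simpa only [vertex, if_pos hi] using hl.2 i (Finset.mem_powerset.1 hT hi)
  · obtain ⟨hi, hiT⟩ := Finset.mem_sdiff.1 hi
    rw [hss]
    simpa only [vertex, if_neg hiT] using hl.2 i hi

lemma IsModTwoCycle.cupCount_update_eq_zero (hS : IsModTwoCycle S)
    (hr : ∀ g v, r (ρ g v) = g * r v) (hSρ : ∀ g, ∀ s ∈ S, ρ g ∘ s ∈ S)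
    {χ : Fin n → G → ZMod 2} {σ : Fin n → V → ZMod 2} (hσ : ∀ j g v, σ j (ρ g v) = χ j g + σ j v)
    (j : Fin n) {τ : V → ZMod 2} (hτ : ∀ g v, τ (ρ g v) = τ v) :
    cupCount S r (Function.update σ j τ) = 0 := by
  have vanish (m : Fin (n + 1)) : ∑ s ∈ S with r (s 0) = 1,
      τ (s m) * ∏ i ∈ Finset.univ.erase j, (σ i (s i.castSucc) + σ i (s i.succ)) = 0 := by
    rw [sum_fundamentalDomain_eq hr hSρ 0 m, hS.sum_mul_prod_erase_eq_zero]
    intro g s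
    simp only [Function.comp_apply, hτ, hσ, add_add_add_comm (χ _ g), CharTwo.add_self_eq_zero,
      zero_add]
  simp only [cupCount, prod_update_coboundary, add_mul, Finset.sum_add_distrib, vanish, add_zero]

theorem IsModTwoCycle.cupCount_eq (hS : IsModTwoCycle S)
    (hr : ∀ g v, r (ρ g v) = g * r v) (hSρ : ∀ g, ∀ s ∈ S, ρ g ∘ s ∈ S)
    {χ : Fin n → G → ZMod 2} {σ σ' : Fin n → V → ZMod 2}
    (hσ : ∀ j g v, σ j (ρ g v) = χ j g + σ j v) (hσ' : ∀ j g v, σ' j (ρ g v) = χ j g + σ' j v) :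
    cupCount S r σ = cupCount S r σ' := by
  suffices ∀ A : Finset (Fin n), cupCount S r (A.piecewise σ σ') = cupCount S r σ' by
    simpa only [Finset.piecewise_univ] using this Finset.univ
  intro A
  induction A using Finset.induction_on with
  | empty => rw [Finset.piecewise_empty]
  | insert j A hj ih =>
    have hmixed (i g v) : A.piecewise σ σ' i (ρ g v) = χ i g + A.piecewise σ σ' i v := by
      by_cases hi : i ∈ A
      · simp only [Finset.piecewise_eq_of_mem _ _ _ hi, hσ]
      · simp only [Finset.piecewise_eq_of_notMem _ _ _ hi, hσ']
    have hdiff (g v) : (σ j - σ' j) (ρ g v) = (σ j - σ' j) v := by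
      simp only [Pi.sub_apply, hσ, hσ', add_sub_add_left_eq_sub]
    rw [Finset.piecewise_insert, ← add_sub_cancel (σ' j) (σ j), cupCount_update_add,
      hS.cupCount_update_eq_zero hr hSρ hmixed j hdiff, add_zero,
      ← Finset.piecewise_eq_of_notMem A σ σ' hj, Function.update_eq_self, ih]

end ModTwoCount

section GridFlags

lemma not_even_of_eq_add_one_or_eq_sub_one {R : Type*} [CommRing R] (h1 : ¬Even (1 : R)) {x y : R}
    (hy : y = x + 1 ∨ y = x - 1) (hx : Even x) : ¬Even y := fun hev => h1 <| by
  rcases hy with rfl | rfl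
  · simpa only [add_sub_cancel_left] using hev.sub hx
  · simpa only [sub_sub_cancel] using hx.sub hev

variable {ι R : Type*} [CommRing R] {n : ℕ}

/-- `w` arises from `v` by moving one even coordinate to an adjacent odd value. -/
def GridStep (v w : ι → R) : Prop :=
  ∃ a, Even (v a) ∧ (w a = v a + 1 ∨ w a = v a - 1) ∧ ∀ b ≠ a, w b = v b

/-- A flag of cells in the cubical grid `ι → R`. A cell is encoded by its barycentre, whose odd
coordinates are the directions in which the cell extends. -/
def IsGridFlag (s : Fin (n + 1) → ι → R) : Prop :=
  (∀ a, Even (s 0 a)) ∧ ∀ j : Fin n, GridStep (s j.castSucc) (s j.succ)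

variable {u v w : ι → R}

lemma GridStep.reflect_left (h : GridStep v w) : GridStep (w + w - v) w := by
  obtain ⟨a, hev, hwa, hw⟩ := h
  refine ⟨a, ?_, ?_, fun b hb => by simp only [Pi.sub_apply, Pi.add_apply, hw b hb]; ring⟩
  · obtain ⟨c, hc⟩ := hev
    exact ⟨w a - c, by simp only [Pi.sub_apply, Pi.add_apply, hc]; ring⟩
  · rcases hwa with hwa | hwa
    · right; simp only [Pi.sub_apply, Pi.add_apply, hwa]; ring
    · left; simp only [Pi.sub_apply, Pi.add_apply, hwa]; ring

lemma GridStep.reflect_right (h : GridStep v w) : GridStep v (v + v - w) := by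
  obtain ⟨a, hev, hwa, hw⟩ := h
  refine ⟨a, hev, ?_, fun b hb => by simp only [Pi.sub_apply, Pi.add_apply, hw b hb]; ring⟩
  rcases hwa with hwa | hwa
  · right; simp only [Pi.sub_apply, Pi.add_apply, hwa]; ring
  · left; simp only [Pi.sub_apply, Pi.add_apply, hwa]; ring

lemma GridStep.exchange (h1 : ¬Even (1 : R)) (huv : GridStep u v) (hvw : GridStep v w) :
    GridStep u (u + w - v) ∧ GridStep (u + w - v) w ∧ u + w - v ≠ v := by
  obtain ⟨a, hau, hva, hv⟩ := huv
  obtain ⟨b, hbv, hwb, hw⟩ := hvw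
  have hodd := not_even_of_eq_add_one_or_eq_sub_one h1 hva hau
  have hba : b ≠ a := fun h => hodd (h ▸ hbv)
  have same_a : (u + w - v) a = u a := by
    rw [Pi.sub_apply, Pi.add_apply, hw a hba.symm, add_sub_cancel_right]
  have same_w (c) (hc : c ≠ a) : (u + w - v) c = w c := by
    rw [Pi.sub_apply, Pi.add_apply, hv c hc, add_sub_cancel_left]
  refine ⟨⟨b, hv b hba ▸ hbv, ?_, fun c hc => ?_⟩, ⟨a, same_a ▸ hau, ?_, fun c hc => ?_⟩, ?_⟩
  · rwa [same_w b hba, ← hv b hba]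
  · rcases eq_or_ne c a with rfl | hca
    · exact same_a
    · rw [same_w c hca, hw c hc, hv c hca]
  · rwa [same_a, hw a hba.symm]
  · exact (same_w c hc).symm
  · intro h
    rw [h] at same_a
    exact hodd (same_a ▸ hau)

lemma GridStep.reflect_right_ne (h2 : (2 : R) ≠ 0) (h : GridStep v w) : v + v - w ≠ w := by
  obtain ⟨a, -, ha, -⟩ := h
  intro h
  have hzero : v a + v a - w a - w a = 0 := sub_eq_zero.2 (congrFun h a)
  rcases ha with ha | ha <;> rw [ha] at hzero
  · exact h2 (by linear_combination -hzero)
  · exact h2 (by linear_combination hzero)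

lemma GridStep.reflect_left_ne (h2 : (2 : R) ≠ 0) (h : GridStep v w) : w + w - v ≠ v := by
  intro hv
  refine h.reflect_right_ne h2 ?_
  have : w + w - v - v = 0 := sub_eq_zero.2 hv
  rw [← sub_eq_zero]
  linear_combination -this

lemma IsGridFlag.update {s : Fin (n + 1) → ι → R} (hs : IsGridFlag s) (l : Fin (n + 1))
    (hl : l = 0 → ∀ a, Even (v a)) (hnext : ∀ j : Fin n, j.castSucc = l → GridStep v (s j.succ))
    (hprev : ∀ j : Fin n, j.succ = l → GridStep (s j.castSucc) v) :
    IsGridFlag (Function.update s l v) := by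
  refine ⟨fun a => ?_, fun j => ?_⟩
  · rcases eq_or_ne 0 l with h | h
    · rw [h, Function.update_self]; exact hl h.symm a
    · rw [Function.update_of_ne h]; exact hs.1 a
  · rcases eq_or_ne j.castSucc l with h | h
    · rw [← h, Function.update_self, Function.update_of_ne j.castSucc_lt_succ.ne']
      exact hnext j h
    · rw [Function.update_of_ne h]
      rcases eq_or_ne j.succ l with h' | h'
      · rw [h', Function.update_self]; exact hprev j h'
      · rw [Function.update_of_ne h']; exact hs.2 j

/-- The partner of a flag is obtained by reflecting its `l`-th vertex in the midpoint of its two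
neighbours; the two extreme vertices are reflected in their only neighbour. -/
lemma IsGridFlag.exists_reflection (h1 : ¬Even (1 : R)) (h2 : (2 : R) ≠ 0) (hn : 0 < n)
    (l : Fin (n + 1)) : ∃ p ≠ l, ∃ q ≠ l, ∀ s : Fin (n + 1) → ι → R, IsGridFlag s →
      IsGridFlag (Function.update s l (s p + s q - s l)) ∧ s p + s q - s l ≠ s l := by
  obtain ⟨n, rfl⟩ := Nat.exists_eq_succ_of_ne_zero hn.ne'
  induction l using Fin.cases with
  | zero =>
    refine ⟨1, one_ne_zero, 1, one_ne_zero, fun s hs => ?_⟩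
    have step : GridStep (s 0) (s 1) := hs.2 0
    refine ⟨hs.update 0 (fun _ a => ?_) (fun j hj => ?_) (fun j hj => ?_),
      step.reflect_left_ne h2⟩
    · exact (Even.add_self _).sub (hs.1 a)
    · obtain rfl : j = 0 := Fin.castSucc_eq_zero_iff.1 hj
      exact step.reflect_left
    · exact absurd hj j.succ_ne_zero
  | succ j =>
    rcases Fin.eq_castSucc_or_eq_last j with ⟨i, rfl⟩ | rfl
    · refine ⟨i.castSucc.castSucc, i.castSucc.castSucc_lt_succ.ne, i.succ.succ,
        (Fin.succ_lt_succ_iff.2 i.castSucc_lt_succ).ne', fun s hs => ?_⟩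
      obtain ⟨hleft, hright, hne⟩ := GridStep.exchange h1 (hs.2 i.castSucc) (hs.2 i.succ)
      refine ⟨hs.update _ (fun h => absurd h (Fin.succ_ne_zero _)) (fun k hk => ?_)
        (fun k hk => ?_), hne⟩
      · obtain rfl : k = i.succ := Fin.castSucc_injective _ hk
        exact hright
      · obtain rfl : k = i.castSucc := Fin.succ_injective _ hk
        exact hleft
    · refine ⟨(Fin.last n).castSucc, (Fin.last n).castSucc_lt_succ.ne, (Fin.last n).castSucc,
        (Fin.last n).castSucc_lt_succ.ne, fun s hs => ?_⟩
      refine ⟨hs.update _ (fun h => absurd h (Fin.succ_ne_zero _)) (fun k hk => ?_)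
        (fun k hk => ?_), (hs.2 _).reflect_right_ne h2⟩
      · exact absurd hk (by rw [Fin.succ_last]; exact k.castSucc_lt_last.ne)
      · obtain rfl : k = Fin.last n := Fin.succ_injective _ hk
        exact (hs.2 _).reflect_right

lemma IsGridFlag.exists_order (h1 : ¬Even (1 : R))
    (e : Fin n ≃ ι) {s : Fin (n + 1) → ι → R} (hs : IsGridFlag s) :
    ∃ π : Fin n ≃ ι, (∀ a, s (Fin.last n) a = s 0 a + 1 ∨ s (Fin.last n) a = s 0 a - 1) ∧
      ∀ t a, s t a = if (π.symm a).castSucc < t then s (Fin.last n) a else s 0 a := by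
  choose π hev hmove hfix using hs.2
  have ne_of_moved {i j : Fin n} (h : s j.castSucc (π i) = s i.succ (π i)) : π i ≠ π j := fun hij =>
    not_even_of_eq_add_one_or_eq_sub_one h1 (hmove i) (hev i) (h ▸ hij ▸ hev j)
  have after (i : Fin n) (t : Fin (n + 1)) (hit : i.castSucc < t) :
      s t (π i) = s i.succ (π i) := by
    induction t using Fin.induction with
    | zero => exact absurd hit (Fin.not_lt_zero _)
    | succ j ih =>
      rcases (Fin.castSucc_lt_succ_iff.1 hit).eq_or_lt with rfl | h
      · rfl
      · rw [hfix j _ (ne_of_moved (ih (Fin.castSucc_lt_castSucc_iff.2 h))),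
          ih (Fin.castSucc_lt_castSucc_iff.2 h)]
  have before (a : ι) (t : Fin (n + 1)) (hat : ∀ j : Fin n, j.castSucc < t → π j ≠ a) :
      s t a = s 0 a := by
    induction t using Fin.induction with
    | zero => rfl
    | succ j ih =>
      rw [hfix j a (hat j j.castSucc_lt_succ).symm,
        ih fun i hi => hat i (hi.trans j.castSucc_lt_succ)]
  have hπ : Function.Injective π := Function.Injective.of_lt_imp_ne fun i j hij =>
    ne_of_moved (after i j.castSucc (Fin.castSucc_lt_castSucc_iff.2 hij))
  have := Finite.of_equiv _ e
  let π' : Fin n ≃ ι := Equiv.ofBijective π ((Function.Injective.bijective_of_nat_card_le hπ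
    (Nat.card_congr e).ge))
  have start (i : Fin n) : s i.castSucc (π i) = s 0 (π i) :=
    before _ _ fun j hj => hπ.ne (Fin.castSucc_lt_castSucc_iff.1 hj).ne
  refine ⟨π', fun a => ?_, fun t a => ?_⟩ <;> obtain ⟨i, rfl⟩ := π'.surjective a
  · simpa only [π', Equiv.ofBijective_apply, after i _ i.castSucc_lt_last, ← start i] using hmove i
  · rw [π'.symm_apply_apply]
    split_ifs with h
    · exact (after i t h).trans (after i _ i.castSucc_lt_last).symm
    · exact before _ _ fun j hj => hπ.ne fun hji => h (hji ▸ hj)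

/-- The flag from the origin into the negative orthant that moves the coordinates in the order
given by `e`. -/
def axisFlag (e : Fin n ≃ ι) (t : Fin (n + 1)) (a : ι) : R :=
  if (e.symm a).castSucc < t then -1 else 0

lemma axisFlag_zero (e : Fin n ≃ ι) :
    axisFlag e 0 = (0 : ι → R) :=
  funext fun _ => if_neg (Fin.not_lt_zero _)

lemma isGridFlag_axisFlag (e : Fin n ≃ ι) :
    IsGridFlag (axisFlag e : Fin (n + 1) → ι → R) := by
  refine ⟨fun _ => axisFlag_zero (R := R) e ▸ Even.zero, fun j => ⟨e j, ?_, ?_, fun b hb => ?_⟩⟩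
  · rw [axisFlag, e.symm_apply_apply, if_neg (lt_irrefl _)]
    exact Even.zero
  · rw [axisFlag, axisFlag, e.symm_apply_apply, if_neg (lt_irrefl _), if_pos j.castSucc_lt_succ]
    exact Or.inr (zero_sub 1).symm
  · have : e.symm b ≠ j := fun h => hb (e.symm_apply_eq.1 h)
    simp only [axisFlag, Fin.castSucc_lt_succ_iff, Fin.castSucc_lt_castSucc_iff,
      this.le_iff_lt]

variable [Fintype R] [Fintype ι] [DecidableEq ι]

variable (ι R n) in
open scoped Classical in
/-- The set of all flags of cells with `n + 1` terms. -/
noncomputable def gridFlags : Finset (Fin (n + 1) → ι → R) :=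
  Finset.univ.filter IsGridFlag

lemma mem_gridFlags {s : Fin (n + 1) → ι → R} : s ∈ gridFlags ι R n ↔ IsGridFlag s := by
  simp only [gridFlags, Finset.mem_filter_univ]

lemma isModTwoCycle_gridFlags (h1 : ¬Even (1 : R)) (h2 : (2 : R) ≠ 0) (hn : 0 < n) :
    IsModTwoCycle (gridFlags ι R n) := by
  intro l
  obtain ⟨p, hp, q, hq, hpq⟩ := IsGridFlag.exists_reflection (ι := ι) h1 h2 hn l
  refine ⟨fun s => Function.update s l (s p + s q - s l), fun s hs => ?_⟩
  obtain ⟨hflag, hne⟩ := hpq s (mem_gridFlags.1 hs)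
  refine ⟨mem_gridFlags.2 hflag, fun h => hne ?_, ?_, fun l' hl' => Function.update_of_ne hl' _ _⟩
  · simpa only [Function.update_self] using congrFun h l
  · simp only [Function.update_self, Function.update_of_ne hp, Function.update_of_ne hq,
      Function.update_idem, sub_sub_cancel, Function.update_eq_self]

end GridFlags

section Twist

variable {d : ℕ}

/-- The value at `c` of a sequence of signs, extended by `1` beyond its length. -/
def padOne (g : Fin d → ℤˣ) (c : ℕ) : ℤˣ := if h : c < d then g ⟨c, h⟩ else 1

lemma padOne_fin (g : Fin d → ℤˣ) (c : Fin d) : padOne g c = g c := dif_pos c.2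

lemma padOne_tail (g : Fin (d + 1) → ℤˣ) (c : ℕ) : padOne (Fin.tail g) c = padOne g (c + 1) := by
  simp only [padOne, Nat.add_lt_add_iff_right]
  rfl

lemma padOne_one (c : ℕ) : padOne (1 : Fin d → ℤˣ) c = 1 := by
  simp only [padOne, Pi.one_apply, dite_eq_ite, ite_self]

lemma padOne_mul (g g' : Fin d → ℤˣ) (c : ℕ) : padOne (g * g') c = padOne g c * padOne g' c := by
  by_cases h : c < d
  · simp only [padOne, dif_pos h, Pi.mul_apply]
  · simp only [padOne, dif_neg h, mul_one]

variable {A : Type*} [AddCommGroup A] {h : A}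

/-- The translation by the half period `h` attached to the sign `-1`. -/
def halfTurn (h : A) (ε : ℤˣ) : A := if ε = 1 then 0 else h

lemma halfTurn_one : halfTurn h 1 = 0 := if_pos rfl

lemma halfTurn_neg_one : halfTurn h (-1) = h := if_neg (by decide)

lemma halfTurn_mul (ε δ : ℤˣ) :
    halfTurn h (ε * δ) = ε • halfTurn h δ + halfTurn h ε := by
  rcases Int.units_eq_one_or ε with rfl | rfl <;> rcases Int.units_eq_one_or δ with rfl | rfl <;>
    simp only [one_mul, mul_one, neg_mul_neg, one_smul, Units.neg_smul, smul_zero, add_zero,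
      zero_add, neg_add_cancel, halfTurn_one, halfTurn_neg_one]

lemma smul_halfTurn (hh : h + h = 0) (ε δ : ℤˣ) : ε • halfTurn h δ = halfTurn h δ := by
  rcases Int.units_eq_one_or ε with rfl | rfl
  · rw [one_smul]
  rcases Int.units_eq_one_or δ with rfl | rfl
  · rw [halfTurn_one, smul_zero]
  · rw [halfTurn_neg_one, Units.neg_smul, one_smul, neg_eq_of_add_eq_zero_left hh]

/-- The action of a sequence of signs on a torus of angles that spherical coordinates turn into the
antipodal action: the `c`-th sign translates the `c`-th angle by the half period `h` and reverses
the preceding angle. -/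
def twist (h : A) (g : Fin d → ℤˣ) (v : Fin d → A) : Fin d → A :=
  fun c => padOne g (c + 1) • v c + halfTurn h (g c)

lemma twist_one (v : Fin d → A) : twist h 1 v = v := by
  funext c
  rw [twist, padOne_one, one_smul, Pi.one_apply, halfTurn_one, add_zero]

lemma twist_mul (hh : h + h = 0) (g g' : Fin d → ℤˣ) (v : Fin d → A) :
    twist h (g * g') v = twist h g (twist h g' v) := by
  funext c
  simp only [twist, padOne_mul, Pi.mul_apply, halfTurn_mul, smul_add, smul_halfTurn hh, mul_smul,
    add_assoc]

lemma twist_zero (g : Fin (d + 1) → ℤˣ) (v : Fin (d + 1) → A) :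
    twist h g v 0 = padOne (Fin.tail g) 0 • v 0 + halfTurn h (g 0) := by
  rw [padOne_tail]; rfl

lemma tail_twist (g : Fin (d + 1) → ℤˣ) (v : Fin (d + 1) → A) :
    Fin.tail (twist h g v) = twist h (Fin.tail g) (Fin.tail v) := by
  funext c
  simp only [Fin.tail, twist, Fin.val_succ, ← padOne_tail]

lemma twist_map {B : Type*} [AddCommGroup B] (f : A →+ B) (g : Fin d → ℤˣ) (v : Fin d → A) :
    f ∘ twist h g v = twist (f h) g (f ∘ v) := by
  funext c
  have map_halfTurn (ε : ℤˣ) : f (halfTurn h ε) = halfTurn (f h) ε := by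
    simp only [halfTurn, apply_ite f, map_zero]
  simp only [Function.comp_apply, twist, map_add, map_halfTurn, Units.smul_def, map_zsmul]

variable {κ : Type*} {dim : κ → ℕ}

/-- The `i`-th block of a family that is indexed by the coordinates of all blocks. -/
def block {α : Type*} (v : (Σ i, Fin (dim i)) → α) (i : κ) : Fin (dim i) → α := fun c => v ⟨i, c⟩

/-- The action of `twist` on each block of a family of angles. -/
def blockTwist (h : A) (g : (Σ i, Fin (dim i)) → ℤˣ) (v : (Σ i, Fin (dim i)) → A) :
    (Σ i, Fin (dim i)) → A :=
  fun a => twist h (block g a.1) (block v a.1) a.2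

lemma block_blockTwist (g : (Σ i, Fin (dim i)) → ℤˣ) (v : (Σ i, Fin (dim i)) → A) (i : κ) :
    block (blockTwist h g v) i = twist h (block g i) (block v i) := rfl

/-- `blockTwist` as a group action. -/
def blockTwistHom (hh : h + h = 0) :
    ((Σ i, Fin (dim i)) → ℤˣ) →* Equiv.Perm ((Σ i, Fin (dim i)) → A) :=
  MonoidHom.toHomPerm
    { toFun := blockTwist h
      map_one' := funext fun v => funext fun a => congrFun (twist_one (block v a.1)) a.2
      map_mul' := fun g g' => funext fun v => funext fun a =>
        congrFun (twist_mul hh (block g a.1) (block g' a.1) (block v a.1)) a.2 }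

end Twist

section Side

variable {m : ℕ}

/-- The half period of the cycle `ZMod (4 * m)`. -/
def halfPeriod (m : ℕ) : ZMod (4 * m) := (2 * m : ℕ)

lemma halfPeriod_add_self : halfPeriod m + halfPeriod m = 0 := by
  rw [halfPeriod, ← Nat.cast_add, show 2 * m + 2 * m = 4 * m by ring, ZMod.natCast_self]

lemma even_halfPeriod : Even (halfPeriod m) := by
  rw [halfPeriod, Nat.cast_mul, Nat.cast_ofNat]
  exact even_two_mul _

lemma two_dvd_four_mul : 2 ∣ 4 * m := Dvd.intro (2 * m) (by ring)

lemma not_even_one_zmod : ¬Even (1 : ZMod (4 * m)) := fun h => by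
  obtain ⟨y, hy⟩ := h.map (ZMod.castHom two_dvd_four_mul (ZMod 2))
  rw [map_one, CharTwo.add_self_eq_zero] at hy
  exact one_ne_zero hy

lemma neg_eq_self_iff_val {x : ZMod (4 * m)} : -x = x ↔ x.val = 0 ∨ x.val = 2 * m := by
  rw [ZMod.neg_eq_self_iff, ZMod.val_eq_zero]
  exact or_congr_right ⟨fun h => by omega, fun h => by omega⟩

/-- The two halves of the cycle `ZMod (4 * m)`: the half that starts at `0` has side `1`, the half
that starts at `halfPeriod m` has side `-1`. -/
def side (x : ZMod (4 * m)) : ℤˣ := if x.val < 2 * m then 1 else -1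

lemma eq_zero_of_neg_eq_self {x : ZMod (4 * m)} (hx : -x = x) (h1 : side x = 1) : x = 0 := by
  rcases neg_eq_self_iff_val.1 hx with h | h
  · exact (ZMod.val_eq_zero x).1 h
  · rw [side, h, if_neg (lt_irrefl _)] at h1
    exact absurd h1 (by decide)

variable [NeZero m]

lemma two_ne_zero_zmod : (2 : ZMod (4 * m)) ≠ 0 := by
  have := Nat.pos_of_neZero m
  intro h
  have := Nat.le_of_dvd two_pos ((ZMod.natCast_eq_zero_iff 2 (4 * m)).1 (by exact_mod_cast h))
  omega

lemma val_halfPeriod : (halfPeriod m).val = 2 * m :=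
  ZMod.val_cast_of_lt (by have := Nat.pos_of_neZero m; omega)

lemma even_val {x : ZMod (4 * m)} (hx : Even x) : Even x.val := by
  obtain ⟨y, rfl⟩ := hx
  rw [ZMod.val_add, Nat.even_iff, Nat.mod_mod_of_dvd _ two_dvd_four_mul]
  omega

lemma side_zero : side (0 : ZMod (4 * m)) = 1 := by
  rw [side, ZMod.val_zero, if_pos (by have := Nat.pos_of_neZero m; omega)]

lemma side_one : side (1 : ZMod (4 * m)) = 1 := by
  have := Nat.pos_of_neZero m
  have : Fact (1 < 4 * m) := ⟨by omega⟩
  rw [side, ZMod.val_one, if_pos (by omega)]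

lemma side_add_halfPeriod (x : ZMod (4 * m)) : side (x + halfPeriod m) = -side x := by
  have hx := x.val_lt
  rcases lt_or_ge x.val (2 * m) with h | h
  · rw [side, side, ZMod.val_add_of_lt, val_halfPeriod, if_pos h, if_neg (by omega)]
    rw [val_halfPeriod]; omega
  · have := ZMod.val_add_val_of_le (a := x) (b := halfPeriod m) (by rw [val_halfPeriod]; omega)
    rw [val_halfPeriod] at this
    rw [side, side, if_neg h.not_gt, if_pos (by omega), neg_neg]

lemma side_neg {x : ZMod (4 * m)} (hx : -x ≠ x) : side (-x) = -side x := by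
  rw [Ne, neg_eq_self_iff_val, not_or] at hx
  have : NeZero x := ⟨fun h => hx.1 (by rw [h, ZMod.val_zero])⟩
  have := x.val_lt
  rw [side, side, ZMod.val_neg_of_ne_zero]
  split_ifs <;> first | rfl | omega

lemma neg_neg_one_ne_zmod : -(-1 : ZMod (4 * m)) ≠ -1 := by
  rw [neg_neg, Ne, eq_neg_iff_add_eq_zero, one_add_one_eq_two]
  exact two_ne_zero_zmod

lemma side_neg_one : side (-1 : ZMod (4 * m)) = -1 := by
  rw [side_neg (by simpa only [neg_neg] using neg_neg_one_ne_zmod.symm), side_one]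

lemma side_eq_of_adjacent {x y : ZMod (4 * m)} (hx : Even x) (hne : -x ≠ x)
    (hy : y = x + 1 ∨ y = x - 1) : side y = side x := by
  rw [Ne, neg_eq_self_iff_val, not_or] at hne
  obtain ⟨k, hk⟩ := even_val hx
  have := x.val_lt
  have : Fact (1 < 4 * m) := ⟨by omega⟩
  have hval : y.val = x.val + 1 ∨ y.val = x.val - 1 := by
    rcases hy with rfl | rfl
    · left
      rw [ZMod.val_add_of_lt] <;> rw [ZMod.val_one]
      omega
    · right
      rw [ZMod.val_sub] <;> rw [ZMod.val_one]
      omega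
  unfold side
  split_ifs <;> first | rfl | omega

lemma side_smul_ne_iff {ε δ : ℤˣ} {x : ZMod (4 * m)} :
    side (ε • x) ≠ side (δ • x) ↔ ε ≠ δ ∧ -x ≠ x := by
  have key : side (-x) ≠ side x ↔ -x ≠ x := by
    refine ⟨fun h hx => h (by rw [hx]), fun hx => ?_⟩
    rw [side_neg hx]
    exact neg_units_ne_self _
  rcases Int.units_eq_one_or ε with rfl | rfl <;> rcases Int.units_eq_one_or δ with rfl | rfl
  · simp only [ne_eq, not_true_eq_false, false_and]
  · rw [ne_comm, Units.neg_smul, one_smul, key, and_iff_right (by decide)]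
  · rw [Units.neg_smul, one_smul, key, and_iff_right (by decide)]
  · simp only [ne_eq, not_true_eq_false, false_and]

lemma side_add_halfTurn (x : ZMod (4 * m)) (ε : ℤˣ) :
    side (x + halfTurn (halfPeriod m) ε) = ε * side x := by
  rcases Int.units_eq_one_or ε with rfl | rfl
  · rw [halfTurn_one, add_zero, one_mul]
  · rw [halfTurn_neg_one, side_add_halfPeriod, neg_one_mul]

lemma side_smul_eq_of_adjacent {x y : ZMod (4 * m)} (hx : Even x) (hne : -x ≠ x)
    (hy : y = x + 1 ∨ y = x - 1) (ε : ℤˣ) : side (ε • y) = side (ε • x) := by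
  rcases Int.units_eq_one_or ε with rfl | rfl
  · simpa only [one_smul] using side_eq_of_adjacent hx hne hy
  · simp only [Units.neg_smul, one_smul]
    refine side_eq_of_adjacent hx.neg (by simpa only [neg_neg] using hne.symm) ?_
    rcases hy with rfl | rfl
    · right; ring
    · left; ring

end Side

section Signs

variable {d m : ℕ}

/-- The signs of a point of the discrete torus, computed from the last coordinate downwards: `twist`
multiplies them by the acting sequence of signs, so the points with all signs `1` form a fundamental
domain. -/
def signs : {d : ℕ} → (Fin d → ZMod (4 * m)) → Fin d → ℤˣ
  | 0, _ => 1
  | _ + 1, v => Fin.cons (side (padOne (signs (Fin.tail v)) 0 • v 0)) (signs (Fin.tail v))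

lemma signs_zero (v : Fin (d + 1) → ZMod (4 * m)) :
    signs v 0 = side (padOne (signs (Fin.tail v)) 0 • v 0) := rfl

lemma signs_succ (v : Fin (d + 1) → ZMod (4 * m)) (c : Fin d) :
    signs v c.succ = signs (Fin.tail v) c := rfl

lemma tail_signs (v : Fin (d + 1) → ZMod (4 * m)) :
    Fin.tail (signs v) = signs (Fin.tail v) := rfl

lemma signs_apply (v : Fin d → ZMod (4 * m)) (c : Fin d) :
    signs v c = side (padOne (signs v) (c + 1) • v c) := by
  induction d with
  | zero => exact c.elim0
  | succ d ih =>
    induction c using Fin.cases with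
    | zero => rw [signs_zero, ← tail_signs, padOne_tail, Fin.val_zero]
    | succ c => rw [signs_succ, ih, ← tail_signs, padOne_tail, Fin.val_succ]; rfl

lemma signs_eq_of_forall_ge {v w : Fin d → ZMod (4 * m)} {c : Fin d}
    (hvw : ∀ c' ≥ c, v c' = w c') : signs v c = signs w c := by
  induction d with
  | zero => exact c.elim0
  | succ d ih =>
    induction c using Fin.cases with
    | zero => rw [funext fun c' => hvw c' (Fin.zero_le c')]
    | succ c =>
      rw [signs_succ, signs_succ]
      exact ih fun c' hc' => hvw c'.succ (Fin.succ_le_succ_iff.2 hc')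

lemma padOne_signs_eq_of_forall_gt {v w : Fin d → ZMod (4 * m)} {c : Fin d}
    (hvw : ∀ c' > c, v c' = w c') : padOne (signs v) (c + 1) = padOne (signs w) (c + 1) := by
  unfold padOne
  split_ifs with h
  · exact signs_eq_of_forall_ge fun c' hc' =>
      hvw c' (lt_of_lt_of_le (Fin.lt_def.2 (Nat.lt_succ_self _)) hc')
  · rfl

variable [NeZero m]

lemma signs_twist (g : Fin d → ℤˣ) (v : Fin d → ZMod (4 * m)) :
    signs (twist (halfPeriod m) g v) = g * signs v := by
  induction d with
  | zero => exact Subsingleton.elim _ _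
  | succ d ih =>
    funext c
    induction c using Fin.cases with
    | zero =>
      rw [signs_zero, tail_twist, ih, padOne_mul, twist_zero, smul_add,
        smul_halfTurn halfPeriod_add_self, side_add_halfTurn, Pi.mul_apply, signs_zero, smul_smul,
        mul_right_comm, Int.units_mul_self, one_mul]
    | succ c => rw [signs_succ, tail_twist, ih]; rfl

lemma signs_eq_side {v : Fin d → ZMod (4 * m)} {c : Fin d} (hv : ∀ c' > c, v c' = 0) :
    signs v c = side (v c) := by
  have next : padOne (signs v) (c + 1) = 1 := by
    unfold padOne
    split_ifs with h
    · rw [signs_apply, hv _ (Fin.lt_def.2 (Nat.lt_succ_self _)), smul_zero, side_zero]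
    · rfl
  rw [signs_apply, next, one_smul]

lemma signs_eq_one_of_eq_zero {v : Fin d → ZMod (4 * m)} {c : Fin d} (hv : v c = 0) :
    signs v c = 1 := by
  rw [signs_apply, hv, smul_zero, side_zero]

lemma neg_eq_self_of_signs_ne {v w : Fin d → ZMod (4 * m)} {c : Fin d} (hv : Even (v c))
    (hw : w c = v c + 1 ∨ w c = v c - 1) (hvw : ∀ c' ≠ c, w c' = v c')
    (hne : signs v c ≠ signs w c) : -v c = v c := by
  by_contra h
  rw [signs_apply v, signs_apply w,
    padOne_signs_eq_of_forall_gt fun c' hc' => hvw c' hc'.ne'] at hne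
  exact hne (side_smul_eq_of_adjacent hv h hw _).symm

lemma padOne_signs_zero_ne_iff {v w : Fin d → ZMod (4 * m)} {c : Fin d}
    (hvw : ∀ c' ≠ c, w c' = v c') :
    padOne (signs v) 0 ≠ padOne (signs w) 0 ↔ signs v c ≠ signs w c ∧ ∀ c' < c, -v c' ≠ v c' := by
  induction d with
  | zero => exact c.elim0
  | succ d ih =>
    have lead (u : Fin (d + 1) → ZMod (4 * m)) : padOne (signs u) 0 = signs u 0 := padOne_fin _ 0
    rw [lead, lead]
    induction c using Fin.cases with
    | zero => exact (and_iff_left fun c' hc' => absurd hc' (Fin.not_lt_zero c')).symm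
    | succ c =>
      rw [signs_zero, signs_zero, hvw 0 c.succ_ne_zero.symm, side_smul_ne_iff,
        ih (v := Fin.tail v) (w := Fin.tail w) fun c' hc' =>
          hvw c'.succ ((Fin.succ_injective d).ne hc'), Fin.forall_fin_succ]
      simp only [Fin.succ_lt_succ_iff, Fin.succ_pos, true_imp_iff, signs_succ, Fin.tail]
      tauto

end Signs

section CombinatorialBorsukUlam

/-- The isomorphism from the group of signs onto the additive group of `ZMod 2`. -/
def signBit (ε : ℤˣ) : ZMod 2 := if ε = 1 then 0 else 1

lemma signBit_mul : ∀ ε δ : ℤˣ, signBit (ε * δ) = signBit ε + signBit δ := by decide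

lemma signBit_add_ne_zero_iff : ∀ {ε δ : ℤˣ}, signBit ε + signBit δ ≠ 0 ↔ ε ≠ δ := by decide

variable {κ : Type*} {dim : κ → ℕ} {m : ℕ}

/-- The product over `A` of the leading signs of the blocks of `g`. -/
def character (A : Finset κ) (g : (Σ i, Fin (dim i)) → ℤˣ) : ℤˣ := ∏ i ∈ A, padOne (block g i) 0

lemma character_mul (A : Finset κ) (g g' : (Σ i, Fin (dim i)) → ℤˣ) :
    character A (g * g') = character A g * character A g' := by
  simp only [character, ← Finset.prod_mul_distrib, ← padOne_mul]
  rfl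

/-- The signs of each block. -/
def blockSigns (v : (Σ i, Fin (dim i)) → ZMod (4 * m)) : (Σ i, Fin (dim i)) → ℤˣ :=
  fun a => signs (block v a.1) a.2

lemma block_blockSigns (v : (Σ i, Fin (dim i)) → ZMod (4 * m)) (i : κ) :
    block (blockSigns v) i = signs (block v i) := rfl

/-- An enumeration of the coordinates is lexicographic when it runs through the blocks in increasing
order, and through each block in increasing order. -/
def IsLexEnum [Preorder κ] {n : ℕ} (e : Fin n ≃ Σ i, Fin (dim i)) : Prop :=
  Monotone (fun j => (e j).1) ∧ ∀ i, StrictMono fun c => e.symm ⟨i, c⟩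

lemma side_eq_one_of_blockSigns_eq_one {v : (Σ i, Fin (dim i)) → ZMod (4 * m)}
    (hv : blockSigns v = 1) (a : Σ i, Fin (dim i)) : side (v a) = 1 := by
  have := signs_apply (block v a.1) a.2
  rw [← block_blockSigns, hv, show block (1 : (Σ i, Fin (dim i)) → ℤˣ) a.1 = 1 from rfl,
    padOne_one, one_smul] at this
  exact this.symm

lemma blockTwist_apply {A : Type*} [AddCommGroup A] (h : A) (g : (Σ i, Fin (dim i)) → ℤˣ)
    (v : (Σ i, Fin (dim i)) → A) (a : Σ i, Fin (dim i)) :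
    blockTwist h g v a = padOne (block g a.1) (a.2 + 1) • v a + halfTurn h (g a) := rfl

lemma even_blockTwist {g : (Σ i, Fin (dim i)) → ℤˣ} {v : (Σ i, Fin (dim i)) → ZMod (4 * m)}
    {a : Σ i, Fin (dim i)} (hv : Even (v a)) : Even (blockTwist (halfPeriod m) g v a) := by
  refine Even.add ?_ ?_
  · rcases Int.units_eq_one_or (padOne (block g a.1) (a.2 + 1)) with h | h <;> rw [h]
    · rwa [one_smul]
    · rw [Units.neg_smul, one_smul]
      exact hv.neg
  · rw [halfTurn]
    split_ifs
    · exact Even.zero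
    · exact even_halfPeriod

lemma GridStep.blockTwist {v w : (Σ i, Fin (dim i)) → ZMod (4 * m)} (h : GridStep v w)
    (g : (Σ i, Fin (dim i)) → ℤˣ) :
    GridStep (blockTwist (halfPeriod m) g v) (blockTwist (halfPeriod m) g w) := by
  obtain ⟨a, hev, hwa, hw⟩ := h
  refine ⟨a, even_blockTwist hev, ?_, fun b hb => ?_⟩
  · rw [blockTwist_apply, blockTwist_apply]
    rcases Int.units_eq_one_or (padOne (block g a.1) (a.2 + 1)) with h | h <;> rw [h]
    · rcases hwa with hwa | hwa <;> simp only [one_smul, hwa]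
      · left; ring
      · right; ring
    · rcases hwa with hwa | hwa <;> simp only [Units.neg_smul, one_smul, hwa]
      · right; ring
      · left; ring
  · rw [blockTwist_apply, blockTwist_apply, hw b hb]

lemma IsGridFlag.blockTwist {n : ℕ} {s : Fin (n + 1) → (Σ i, Fin (dim i)) → ZMod (4 * m)}
    (hs : IsGridFlag s) (g : (Σ i, Fin (dim i)) → ℤˣ) :
    IsGridFlag (OrbitSpace.blockTwist (halfPeriod m) g ∘ s) :=
  ⟨fun a => even_blockTwist (hs.1 a), fun j => (hs.2 j).blockTwist g⟩

lemma IsLexEnum.eq_of_forall_fst_le [LinearOrder κ] {n : ℕ} {e π : Fin n ≃ Σ i, Fin (dim i)}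
    (he : IsLexEnum e) (hfst : ∀ j, (π j).1 ≤ (e j).1)
    (hsnd : ∀ j, ∀ c < (π j).2, π.symm ⟨(π j).1, c⟩ < j) : π = e := by
  refine Equiv.ext fun j => ?_
  induction j using WellFoundedLT.induction with
  | ind j ih =>
    obtain ⟨k, hk⟩ := e.surjective (π j)
    rw [← hk]
    rcases lt_trichotomy k j with hkj | rfl | hjk
    · exact absurd (π.injective ((ih k hkj).trans hk)) hkj.ne
    · rfl
    · have same_block : (e j).1 = (e k).1 := le_antisymm (he.1 hjk.le) (hk ▸ hfst j)
      obtain ⟨c, hc⟩ : ∃ c, e j = ⟨(π j).1, c⟩ := by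
        rw [← hk, ← same_block]
        exact ⟨(e j).2, rfl⟩
      have hlt : c < (π j).2 := by
        rw [← (he.2 (π j).1).lt_iff_lt, ← hc]
        change e.symm (e j) < e.symm (π j)
        rwa [← hk, e.symm_apply_apply, e.symm_apply_apply]
      have earlier : π.symm (e j) < j := hc ▸ hsnd j c hlt
      have := ih _ earlier
      rw [π.apply_symm_apply, e.apply_eq_iff_eq] at this
      exact absurd this earlier.ne'

variable [NeZero m]

lemma blockSigns_blockTwist (g : (Σ i, Fin (dim i)) → ℤˣ)
    (v : (Σ i, Fin (dim i)) → ZMod (4 * m)) :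
    blockSigns (blockTwist (halfPeriod m) g v) = g * blockSigns v := by
  funext a
  rw [blockSigns, block_blockTwist, signs_twist]
  rfl

lemma character_blockSigns_ne_iff {A : Finset κ} {v w : (Σ i, Fin (dim i)) → ZMod (4 * m)}
    {b : Σ i, Fin (dim i)} (hvw : ∀ a ≠ b, w a = v a) :
    character A (blockSigns v) ≠ character A (blockSigns w) ↔
      b.1 ∈ A ∧ blockSigns v b ≠ blockSigns w b ∧ ∀ c < b.2, -v ⟨b.1, c⟩ ≠ v ⟨b.1, c⟩ := by
  classical
  obtain ⟨i, c⟩ := b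
  have same_block (i') (hi' : i' ≠ i) : block w i' = block v i' :=
    funext fun c' => hvw ⟨i', c'⟩ fun h => hi' (congrArg Sigma.fst h)
  have same_lead (B : Finset κ) (hB : ∀ i' ∈ B, i' ≠ i) :
      ∏ i' ∈ B, padOne (signs (block w i')) 0 = ∏ i' ∈ B, padOne (signs (block v i')) 0 :=
    Finset.prod_congr rfl fun i' hi' => by rw [same_block i' (hB i' hi')]
  simp only [character, block_blockSigns]
  by_cases hi : i ∈ A
  · rw [← Finset.mul_prod_erase A _ hi, ← Finset.mul_prod_erase A _ hi,
      same_lead _ fun _ => Finset.ne_of_mem_erase, (mul_left_injective _).ne_iff,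
      padOne_signs_zero_ne_iff (v := block v i) (w := block w i) (c := c)
        fun c' hc' => hvw ⟨i, c'⟩ fun h => hc' (eq_of_heq (Sigma.mk.inj h).2)]
    exact (and_iff_right hi).symm
  · rw [same_lead A fun i' hi' h => hi (h ▸ hi')]
    simp only [ne_eq, not_true_eq_false, hi, false_and]

lemma blockSigns_zero : blockSigns (0 : (Σ i, Fin (dim i)) → ZMod (4 * m)) = 1 :=
  funext fun _ => signs_eq_one_of_eq_zero rfl

lemma neg_eq_self_of_blockSigns_ne {v w : (Σ i, Fin (dim i)) → ZMod (4 * m)}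
    {b : Σ i, Fin (dim i)} (hv : Even (v b)) (hw : w b = v b + 1 ∨ w b = v b - 1)
    (hvw : ∀ a ≠ b, w a = v a) (hne : blockSigns v b ≠ blockSigns w b) : -v b = v b :=
  neg_eq_self_of_signs_ne (v := block v b.1) (w := block w b.1) (c := b.2) hv hw
    (fun c' hc' => hvw ⟨b.1, c'⟩ fun h => hc' (eq_of_heq (Sigma.ext_iff.1 h).2)) hne

lemma blockSigns_eq_side_of_isLexEnum [Preorder κ] {n : ℕ} {e : Fin n ≃ Σ i, Fin (dim i)}
    (he : IsLexEnum e) {v : (Σ i, Fin (dim i)) → ZMod (4 * m)} {j : Fin n}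
    (hv : ∀ k > j, v (e k) = 0) : blockSigns v (e j) = side (v (e j)) := by
  refine signs_eq_side fun c' hc' => ?_
  have later : j < e.symm ⟨(e j).1, c'⟩ := by
    simpa only [Sigma.eta, e.symm_apply_apply] using he.2 _ hc'
  have := hv _ later
  rwa [e.apply_symm_apply] at this

lemma character_axisFlag_ne [Preorder κ] {n : ℕ} {e : Fin n ≃ Σ i, Fin (dim i)}
    (he : IsLexEnum e) {A : Finset κ} {j : Fin n} (hA : (e j).1 ∈ A) :
    character A (blockSigns (axisFlag e j.castSucc : (Σ i, Fin (dim i)) → ZMod (4 * m))) ≠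
      character A (blockSigns (axisFlag e j.succ : (Σ i, Fin (dim i)) → ZMod (4 * m))) := by
  have apply (t : Fin (n + 1)) (k : Fin n) :
      axisFlag e t (e k) = if k.castSucc < t then (-1 : ZMod (4 * m)) else 0 := by
    rw [axisFlag, e.symm_apply_apply]
  refine (character_blockSigns_ne_iff (b := e j) fun a ha => ?_).2 ⟨hA, ?_, fun c hc => ?_⟩
  · obtain ⟨k, rfl⟩ := e.surjective a
    have : k ≠ j := fun h => ha (h ▸ rfl)
    simp only [apply, Fin.castSucc_lt_succ_iff, Fin.castSucc_lt_castSucc_iff, this.le_iff_lt]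
  · rw [blockSigns_eq_side_of_isLexEnum he, blockSigns_eq_side_of_isLexEnum he, apply, apply,
      if_neg (lt_irrefl _), if_pos j.castSucc_lt_succ, side_zero, side_neg_one]
    · decide
    · intro k hk
      rw [apply, if_neg (by rw [Fin.castSucc_lt_succ_iff]; exact hk.not_ge)]
    · intro k hk
      rw [apply, if_neg (by rw [Fin.castSucc_lt_castSucc_iff]; exact hk.not_gt)]
  · have earlier := he.2 _ hc
    simp only [Sigma.eta, Equiv.symm_apply_apply] at earlier
    rw [axisFlag, if_pos (Fin.castSucc_lt_castSucc_iff.2 earlier)]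
    exact neg_neg_one_ne_zmod

/-- The product of leading signs over `A (e j)` can only change at a coordinate in a block of
`A (e j)` whose predecessors in its block have already left the origin, which forces the order
`e`. -/
lemma eq_axisFlag [LinearOrder κ] {n : ℕ} {e : Fin n ≃ Σ i, Fin (dim i)} (he : IsLexEnum e)
    {A : (Σ i, Fin (dim i)) → Finset κ} (hA : ∀ a, ∀ i ∈ A a, i ≤ a.1)
    {s : Fin (n + 1) → (Σ i, Fin (dim i)) → ZMod (4 * m)} (hs : IsGridFlag s)
    (h0 : blockSigns (s 0) = 1)
    (hne : ∀ j, character (A (e j)) (blockSigns (s j.castSucc)) ≠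
      character (A (e j)) (blockSigns (s j.succ))) : s = axisFlag e := by
  obtain ⟨π, hlast, hsπ⟩ := hs.exists_order not_even_one_zmod e
  have unmoved (j : Fin n) (t) (htj : t ≤ j.castSucc) : s t (π j) = s 0 (π j) := by
    rw [hsπ, π.symm_apply_apply, if_neg htj.not_gt]
  have before (j : Fin n) : s j.castSucc (π j) = s 0 (π j) := unmoved j _ le_rfl
  have after (j : Fin n) : s j.succ (π j) = s (Fin.last n) (π j) := by
    rw [hsπ, π.symm_apply_apply, if_pos j.castSucc_lt_succ]
  have fixed (j : Fin n) (a) (ha : a ≠ π j) : s j.succ a = s j.castSucc a := by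
    have : π.symm a ≠ j := fun h => ha (π.symm_apply_eq.1 h)
    simp only [hsπ j.succ, hsπ j.castSucc, Fin.castSucc_lt_succ_iff, Fin.castSucc_lt_castSucc_iff,
      this.le_iff_lt]
  have change_at (j : Fin n) := (character_blockSigns_ne_iff (fixed j)).1 (hne j)
  have origin : s 0 = 0 := by
    funext a
    obtain ⟨j, rfl⟩ := π.surjective a
    refine eq_zero_of_neg_eq_self ?_ (side_eq_one_of_blockSigns_eq_one h0 _)
    have := neg_eq_self_of_blockSigns_ne (before j ▸ hs.1 _) ?_ (fixed j) (change_at j).2.1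
    · rwa [before] at this
    · rw [before, after]
      exact hlast _
  have order : π = e := he.eq_of_forall_fst_le (fun j => hA _ _ (change_at j).1) fun j c hc => by
    by_contra hle
    refine (change_at j).2.2 c hc ?_
    rw [hsπ, if_neg (by rwa [Fin.castSucc_lt_castSucc_iff]), origin, Pi.zero_apply, neg_zero]
  subst order
  funext t a
  rw [hsπ, axisFlag, origin, Pi.zero_apply]
  congr 1
  obtain ⟨j, rfl⟩ := π.surjective a
  refine ((hlast _).resolve_left fun hone => (change_at j).2.1 ?_).trans (by simp only [origin,
    Pi.zero_apply, zero_sub])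
  rw [blockSigns_eq_side_of_isLexEnum he, blockSigns_eq_side_of_isLexEnum he, before, after, hone,
    origin, Pi.zero_apply, zero_add, side_zero, side_one]
  · exact fun k hk => (unmoved k _ (Fin.castSucc_lt_iff_succ_le.1
      (Fin.castSucc_lt_castSucc_iff.2 hk))).trans (congrFun origin _)
  · exact fun k hk => (unmoved k _ (Fin.castSucc_le_castSucc_iff.2 hk.le)).trans
      (congrFun origin _)

open scoped Classical in
lemma cupCount_character [LinearOrder κ] [Fintype κ] {n : ℕ} {e : Fin n ≃ Σ i, Fin (dim i)}
    (he : IsLexEnum e) {A : (Σ i, Fin (dim i)) → Finset κ} (hmem : ∀ a, a.1 ∈ A a)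
    (hA : ∀ a, ∀ i ∈ A a, i ≤ a.1) :
    cupCount (gridFlags (Σ i, Fin (dim i)) (ZMod (4 * m)) n) blockSigns
      (fun j v => signBit (character (A (e j)) (blockSigns v))) = 1 := by
  rw [cupCount, Finset.sum_eq_single (axisFlag e)]
  · refine Finset.prod_eq_one fun j _ => Fin.eq_one_of_ne_zero _ ?_
    exact signBit_add_ne_zero_iff.2 (character_axisFlag_ne he (hmem _))
  · intro s hs hne
    obtain ⟨hflag, h0⟩ := Finset.mem_filter.1 hs
    by_contra hprod
    refine hne (eq_axisFlag he hA (mem_gridFlags.1 hflag) h0 fun j => ?_)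
    exact signBit_add_ne_zero_iff.1 (Finset.prod_ne_zero_iff.1 hprod j (Finset.mem_univ j))
  · intro h
    refine absurd (Finset.mem_filter.2 ⟨mem_gridFlags.2 (isGridFlag_axisFlag e), ?_⟩) h
    rw [axisFlag_zero, blockSigns_zero]

/-- The count of the flags along which the `j`-th function changes sign at the `j`-th step does not
depend on the functions; for the products of the signs of the coordinates it is `1`. -/
theorem exists_gridFlag_forall_ne [LinearOrder κ] [Finite κ] {n : ℕ}
    {e : Fin n ≃ Σ i, Fin (dim i)} (he : IsLexEnum e) {A : (Σ i, Fin (dim i)) → Finset κ}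
    (hmem : ∀ a, a.1 ∈ A a) (hA : ∀ a, ∀ i ∈ A a, i ≤ a.1)
    {σ : (Σ i, Fin (dim i)) → ((Σ i, Fin (dim i)) → ZMod (4 * m)) → ℤˣ}
    (hσ : ∀ a g v, σ a (blockTwist (halfPeriod m) g v) = character (A a) g * σ a v) :
    ∃ s : Fin (n + 1) → (Σ i, Fin (dim i)) → ZMod (4 * m), IsGridFlag s ∧
      ∀ j, σ (e j) (s j.castSucc) ≠ σ (e j) (s j.succ) := by
  classical
  cases nonempty_fintype κ
  rcases n.eq_zero_or_pos with rfl | hn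
  · exact ⟨axisFlag e, isGridFlag_axisFlag e, fun j => j.elim0⟩
  have hcount : cupCount (gridFlags (Σ i, Fin (dim i)) (ZMod (4 * m)) n) blockSigns
      (fun j v => signBit (σ (e j) v)) ≠ 0 := by
    rw [(isModTwoCycle_gridFlags not_even_one_zmod two_ne_zero_zmod hn).cupCount_eq
      (ρ := blockTwistHom halfPeriod_add_self) (χ := fun j g => signBit (character (A (e j)) g))
      blockSigns_blockTwist (fun g s hs => mem_gridFlags.2 ((mem_gridFlags.1 hs).blockTwist g))
      (fun j g v => (congrArg signBit (hσ (e j) g v)).trans (signBit_mul _ _))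
      (σ' := fun j v => signBit (character (A (e j)) (blockSigns v))),
      cupCount_character he hmem hA]
    · exact one_ne_zero
    · intro j g v
      change signBit (character _ (blockSigns (blockTwist (halfPeriod m) g v))) = _
      rw [blockSigns_blockTwist, character_mul, signBit_mul]
  obtain ⟨s, hs, hprod⟩ := Finset.exists_ne_zero_of_sum_ne_zero hcount
  exact ⟨s, mem_gridFlags.1 (Finset.mem_filter.1 hs).1, fun j =>
    signBit_add_ne_zero_iff.1 (Finset.prod_ne_zero_iff.1 hprod j (Finset.mem_univ j))⟩

lemma exists_isLexEnum [LinearOrder κ] [Fintype κ] (dim : κ → ℕ) :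
    ∃ e : Fin (Fintype.card (Σ i, Fin (dim i))) ≃ Σ i, Fin (dim i), IsLexEnum e := by
  let e : Fin (Fintype.card (Σₗ i, Fin (dim i))) ≃o Σₗ i, Fin (dim i) :=
    monoEquivOfFin _ rfl
  refine ⟨e.toEquiv, fun j k hjk => ?_, fun i c c' hcc' => ?_⟩
  · rcases Sigma.Lex.le_def.1 (e.monotone hjk) with h | ⟨h, -⟩
    · exact h.le
    · exact h.le
  · exact e.symm.strictMono (Sigma.Lex.lt_def.2 (Or.inr ⟨rfl, hcc'⟩))

end CombinatorialBorsukUlam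

section Torus

instance : CompactSpace Real.Angle :=
  have : Fact (0 < 2 * Real.pi) := ⟨Real.two_pi_pos⟩
  inferInstanceAs (CompactSpace (AddCircle (2 * Real.pi)))

lemma nsmul_coe_pi_div (m : ℕ) [NeZero m] :
    (2 * m) • ((Real.pi / (2 * m) : ℝ) : Real.Angle) = Real.pi := by
  rw [← Real.Angle.coe_nsmul, nsmul_eq_mul, Nat.cast_mul, Nat.cast_ofNat,
    mul_div_cancel₀ _ (by have := NeZero.ne m; positivity)]

/-- The discretization of the circle by `4 * m` equidistant angles. -/
noncomputable def gridAngle (m : ℕ) [NeZero m] : ZMod (4 * m) →+ Real.Angle :=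
  ZMod.lift (4 * m) ⟨zmultiplesHom Real.Angle (Real.pi / (2 * m) : ℝ), by
    rw [zmultiplesHom_apply, natCast_zsmul, show 4 * m = 2 * m + 2 * m by ring, add_nsmul,
      nsmul_coe_pi_div, ← Real.Angle.coe_add, ← two_mul, Real.Angle.coe_two_pi]⟩

lemma gridAngle_natCast (m : ℕ) [NeZero m] (k : ℕ) :
    gridAngle m k = k • ((Real.pi / (2 * m) : ℝ) : Real.Angle) := by
  rw [← Int.cast_natCast, gridAngle, ZMod.lift_coe, zmultiplesHom_apply, natCast_zsmul]

lemma gridAngle_halfPeriod (m : ℕ) [NeZero m] : gridAngle m (halfPeriod m) = Real.pi := by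
  rw [halfPeriod, gridAngle_natCast, nsmul_coe_pi_div]

lemma norm_gridAngle_one_le (m : ℕ) [NeZero m] : ‖gridAngle m 1‖ ≤ Real.pi / (2 * m) := by
  rw [← Nat.cast_one, gridAngle_natCast, one_nsmul]
  refine QuotientAddGroup.norm_mk_le_norm.trans_eq (Real.norm_of_nonneg (by positivity))

/-- The sign of a real number, with the sign of `0` prescribed to be `ε`. -/
noncomputable def signOr (ε : ℤˣ) (x : ℝ) : ℤˣ := if x = 0 then ε else if 0 < x then 1 else -1

lemma signOr_mul_smul (δ ε : ℤˣ) (x : ℝ) : signOr (δ * ε) (δ • x) = δ * signOr ε x := by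
  rcases Int.units_eq_one_or δ with rfl | rfl
  · simp only [one_mul, one_smul]
  · rcases lt_trichotomy x 0 with h | rfl | h
    · simp [signOr, Units.neg_smul, h, h.ne, h.not_gt]
    · simp [signOr]
    · simp [signOr, Units.neg_smul, h, h.ne', h.not_gt]

lemma signOr_eq_of_dist_lt {ε : ℤˣ} {x y : ℝ} (hxy : dist x y < |y|) :
    signOr ε x = if 0 < y then 1 else -1 := by
  rw [Real.dist_eq] at hxy
  rcases lt_trichotomy y 0 with h | rfl | h
  · rw [abs_of_neg h] at hxy
    have : x < 0 := by linarith [le_abs_self (x - y)]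
    rw [signOr, if_neg this.ne, if_neg this.not_gt, if_neg h.not_gt]
  · exact absurd hxy (by rw [abs_zero]; exact (abs_nonneg _).not_gt)
  · rw [abs_of_pos h] at hxy
    have : 0 < x := by linarith [neg_abs_le (x - y)]
    rw [signOr, if_neg this.ne', if_pos this, if_pos h]

variable {κ : Type*} {dim : κ → ℕ}

/-- The points of the discrete torus as points of the torus. -/
noncomputable def gridPoint {m : ℕ} [NeZero m] (v : (Σ i, Fin (dim i)) → ZMod (4 * m)) :
    (Σ i, Fin (dim i)) → Real.Angle :=
  gridAngle m ∘ v

lemma gridPoint_blockTwist {m : ℕ} [NeZero m] (g : (Σ i, Fin (dim i)) → ℤˣ)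
    (v : (Σ i, Fin (dim i)) → ZMod (4 * m)) :
    gridPoint (blockTwist (halfPeriod m) g v) =
      blockTwist (Real.pi : Real.Angle) g (gridPoint v) := by
  funext a
  have := congrFun (twist_map (h := halfPeriod m) (gridAngle m) (block g a.1) (block v a.1)) a.2
  rwa [gridAngle_halfPeriod] at this

lemma IsGridFlag.dist_gridPoint_le [Fintype κ] {m n : ℕ} [NeZero m]
    {s : Fin (n + 1) → (Σ i, Fin (dim i)) → ZMod (4 * m)} (hs : IsGridFlag s)
    (e : Fin n ≃ Σ i, Fin (dim i)) (t : Fin (n + 1)) :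
    dist (gridPoint (s t)) (gridPoint (s 0)) ≤ Real.pi / (2 * m) := by
  obtain ⟨π, hlast, hsπ⟩ := hs.exists_order not_even_one_zmod e
  refine (dist_pi_le_iff (by positivity)).2 fun a => ?_
  rw [gridPoint, gridPoint, Function.comp_apply, Function.comp_apply, dist_eq_norm, ← map_sub, hsπ]
  split_ifs
  · rcases hlast a with h | h <;> rw [h]
    · rw [add_sub_cancel_left]
      exact norm_gridAngle_one_le m
    · rw [sub_sub_cancel_left, map_neg, norm_neg]
      exact norm_gridAngle_one_le m
  · rw [sub_self, map_zero, norm_zero]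
    positivity

/-- If there were no zero, then along each flag of a sufficiently fine grid some coordinate of `Φ`
would have constant sign. -/
theorem exists_eq_zero_of_blockTwist [LinearOrder κ] [Finite κ]
    {A : (Σ i, Fin (dim i)) → Finset κ} (hmem : ∀ a, a.1 ∈ A a) (hA : ∀ a, ∀ i ∈ A a, i ≤ a.1)
    {Φ : ((Σ i, Fin (dim i)) → Real.Angle) → (Σ i, Fin (dim i)) → ℝ} (hΦ : Continuous Φ)
    (hΦA : ∀ g θ a, Φ (blockTwist (Real.pi : Real.Angle) g θ) a = character (A a) g • Φ θ a) :
    ∃ θ, Φ θ = 0 := by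
  cases nonempty_fintype κ
  by_contra! hne
  obtain ⟨θ₀, -, hθ₀⟩ := isCompact_univ.exists_isMinOn Set.univ_nonempty hΦ.norm.continuousOn
  rw [isMinOn_univ_iff] at hθ₀
  obtain ⟨η, hη, hΦη⟩ := Metric.uniformContinuous_iff.1
    (CompactSpace.uniformContinuous_of_continuous hΦ) _ (norm_pos_iff.2 (hne θ₀))
  obtain ⟨k, hk⟩ := exists_nat_one_div_lt (div_pos hη Real.pi_pos)
  have hmesh : Real.pi / (2 * (k + 1 : ℕ)) < η := by
    rw [lt_div_iff₀ Real.pi_pos] at hk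
    refine lt_of_le_of_lt ?_ hk
    rw [one_div_mul_eq_div]
    gcongr
    push_cast
    linarith [(k.cast_nonneg : (0 : ℝ) ≤ k)]
  obtain ⟨e, he⟩ := exists_isLexEnum dim
  obtain ⟨s, hs, hchange⟩ := exists_gridFlag_forall_ne (m := k + 1) he hmem hA
    (σ := fun a v => signOr (character (A a) (blockSigns v)) (Φ (gridPoint v) a)) fun a g v => by
      rw [gridPoint_blockTwist, hΦA, blockSigns_blockTwist, character_mul, signOr_mul_smul]
  obtain ⟨a, ha⟩ : ∃ a, ‖Φ θ₀‖ ≤ ‖Φ (gridPoint (s 0)) a‖ := by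
    by_contra! h
    exact (hθ₀ (gridPoint (s 0))).not_gt ((pi_norm_lt_iff (norm_pos_iff.2 (hne θ₀))).2 h)
  have near (t) : dist (Φ (gridPoint (s t)) a) (Φ (gridPoint (s 0)) a) <
      |Φ (gridPoint (s 0)) a| :=
    (dist_le_pi_dist _ _ a).trans_lt
      ((hΦη ((hs.dist_gridPoint_le e t).trans_lt hmesh)).trans_le ha)
  obtain ⟨j, rfl⟩ := e.surjective a
  exact hchange j ((signOr_eq_of_dist_lt (near _)).trans (signOr_eq_of_dist_lt (near _)).symm)

end Torus

section Spheres

variable {d : ℕ}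

/-- Spherical coordinates on the unit sphere of `ℝ ^ (d + 1)`. -/
noncomputable def spherical : {d : ℕ} → (Fin d → Real.Angle) → Fin (d + 1) → ℝ
  | 0, _ => 1
  | _ + 1, θ => Fin.cons (θ 0).cos ((θ 0).sin • spherical (Fin.tail θ))

lemma sum_spherical_sq (θ : Fin d → Real.Angle) : ∑ c, spherical θ c ^ 2 = 1 := by
  induction d with
  | zero => simp [spherical]
  | succ d ih =>
    simp only [spherical, Fin.sum_univ_succ, Fin.cons_zero, Fin.cons_succ, Pi.smul_apply,
      smul_eq_mul, mul_pow, ← Finset.mul_sum, ih, mul_one, Real.Angle.cos_sq_add_sin_sq]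

lemma continuous_spherical : Continuous (spherical : (Fin d → Real.Angle) → Fin (d + 1) → ℝ) := by
  induction d with
  | zero => exact continuous_const
  | succ d ih =>
    refine Continuous.finCons (Real.Angle.continuous_cos.comp (continuous_apply 0)) ?_
    exact (Real.Angle.continuous_sin.comp (continuous_apply 0)).smul
      (ih.comp (continuous_pi fun c => continuous_apply c.succ))

lemma cos_smul_add_halfTurn (ε δ : ℤˣ) (θ : Real.Angle) :
    (ε • θ + halfTurn (Real.pi : Real.Angle) δ).cos = δ • θ.cos := by
  rcases Int.units_eq_one_or ε with rfl | rfl <;> rcases Int.units_eq_one_or δ with rfl | rfl <;>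
    simp [halfTurn_one, halfTurn_neg_one, Units.neg_smul]

lemma sin_smul_add_halfTurn (ε δ : ℤˣ) (θ : Real.Angle) :
    (ε • θ + halfTurn (Real.pi : Real.Angle) δ).sin = (δ * ε) • θ.sin := by
  rcases Int.units_eq_one_or ε with rfl | rfl <;> rcases Int.units_eq_one_or δ with rfl | rfl <;>
    simp [halfTurn_one, halfTurn_neg_one, Units.neg_smul]

lemma spherical_twist (g : Fin d → ℤˣ) (θ : Fin d → Real.Angle) :
    spherical (twist (Real.pi : Real.Angle) g θ) = padOne g 0 • spherical θ := by
  induction d with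
  | zero =>
    rw [padOne, dif_neg (lt_irrefl _), one_smul, Subsingleton.elim (twist _ g θ) θ]
  | succ d ih =>
    funext c
    rw [spherical, spherical, tail_twist, ih, twist_zero, cos_smul_add_halfTurn,
      sin_smul_add_halfTurn, show padOne g 0 = g 0 from padOne_fin g 0]
    induction c using Fin.cases with
    | zero => rfl
    | succ c =>
      simp only [Fin.cons_succ, Pi.smul_apply, smul_assoc, mul_smul]
      rw [smul_comm ((θ 0).sin), smul_smul _ _ ((θ 0).sin • _), Int.units_mul_self, one_smul]

/-- The unit sphere of dimension `d`. It is not reducible, so that its algebraic structure is only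
the antipodal action below. -/
def UnitSphere (d : ℕ) : Type := Metric.sphere (0 : EuclideanSpace ℝ (Fin (d + 1))) 1

noncomputable instance : MetricSpace (UnitSphere d) :=
  inferInstanceAs (MetricSpace (Metric.sphere _ _))

instance : CompactSpace (UnitSphere d) := inferInstanceAs (CompactSpace (Metric.sphere _ _))

noncomputable instance : MulAction ℤˣ (UnitSphere d) where
  smul ε x := ⟨ε • x.1, by
    rw [mem_sphere_zero_iff_norm]
    refine Eq.trans ?_ (norm_eq_of_mem_sphere x)
    rcases Int.units_eq_one_or ε with rfl | rfl
    · rw [one_smul]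
    · rw [Units.neg_smul, one_smul, norm_neg]⟩
  one_smul x := Subtype.ext (one_smul _ x.1)
  mul_smul ε δ x := Subtype.ext (mul_smul ε δ x.1)

instance : ContinuousSMul ℤˣ (UnitSphere d) where
  continuous_smul := by
    refine Continuous.subtype_mk (continuous_prod_of_discrete_left.2 fun ε => ?_) _
    exact continuous_subtype_val.const_smul ε

/-- Spherical coordinates as a map from the torus to the sphere. -/
noncomputable def toUnitSphere (θ : Fin d → Real.Angle) : UnitSphere d :=
  ⟨WithLp.toLp 2 (spherical θ), by
    rw [mem_sphere_zero_iff_norm, EuclideanSpace.norm_eq]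
    simp [sum_spherical_sq]⟩

lemma continuous_toUnitSphere : Continuous (toUnitSphere : (Fin d → Real.Angle) → UnitSphere d) :=
  ((PiLp.continuous_toLp 2 _).comp continuous_spherical).subtype_mk _

lemma toUnitSphere_twist (g : Fin d → ℤˣ) (θ : Fin d → Real.Angle) :
    toUnitSphere (twist (Real.pi : Real.Angle) g θ) = padOne g 0 • toUnitSphere θ :=
  Subtype.ext (congrArg (WithLp.toLp 2) (spherical_twist g θ))

variable {κ : Type*} {dim : κ → ℕ}

theorem exists_eq_zero_of_prod_unitSphere [LinearOrder κ] [Finite κ]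
    {A : (Σ i, Fin (dim i)) → Finset κ} (hmem : ∀ a, a.1 ∈ A a) (hA : ∀ a, ∀ i ∈ A a, i ≤ a.1)
    {F : (∀ i, UnitSphere (dim i)) → (Σ i, Fin (dim i)) → ℝ} (hF : Continuous F)
    (hFA : ∀ (ε : κ → ℤˣ) x a, F (ε • x) a = (∏ i ∈ A a, ε i) • F x a) : ∃ x, F x = 0 := by
  obtain ⟨θ, hθ⟩ := exists_eq_zero_of_blockTwist hmem hA
    (Φ := fun θ => F fun i => toUnitSphere (block θ i))
    (hF.comp (continuous_pi fun i => continuous_toUnitSphere.comp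
      (continuous_pi fun c => continuous_apply _))) fun g θ a => by
    simp only [block_blockTwist, toUnitSphere_twist]
    exact hFA (fun i => padOne (block g i) 0) _ a
  exact ⟨_, hθ⟩

end Spheres

section ConstantOrbits

lemma sum_prod_units_eq_zero {κ : Type*} [Fintype κ] {η : κ → ℤˣ} (hη : η ≠ 1) :
    ∑ A : Finset κ, ((∏ i ∈ A, η i : ℤˣ) : ℤ) = 0 := by
  obtain ⟨i, hi⟩ := Function.ne_iff.1 hη
  have hi : η i = -1 := (Int.units_eq_one_or _).resolve_left hi
  simp only [Units.coe_prod, ← Finset.powerset_univ, ← Finset.prod_one_add]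
  exact Finset.prod_eq_zero (Finset.mem_univ i) (by rw [hi]; rfl)

section Fourier

variable {κ X : Type*} [Fintype κ] [DecidableEq κ] [MulAction (κ → ℤˣ) X]

/-- The Fourier coefficient at the character `∏ i ∈ A, ε i` of the restriction of `g` to the orbit
of `x`. -/
def fourierCoeff (A : Finset κ) (g : X → ℝ) (x : X) : ℝ :=
  ∑ ε : κ → ℤˣ, (∏ i ∈ A, ε i) • g (ε • x)

lemma fourierCoeff_smul (A : Finset κ) (g : X → ℝ) (δ : κ → ℤˣ) (x : X) :
    fourierCoeff A g (δ • x) = (∏ i ∈ A, δ i) • fourierCoeff A g x := by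
  rw [fourierCoeff, fourierCoeff, Finset.smul_sum]
  refine Fintype.sum_equiv (Equiv.mulRight δ) _ _ fun ε => ?_
  simp only [Equiv.coe_mulRight, Pi.mul_apply, Finset.prod_mul_distrib, mul_smul]
  rw [smul_comm (∏ i ∈ A, δ i), smul_smul (∏ i ∈ A, δ i), Int.units_mul_self, one_smul]

lemma sum_smul_fourierCoeff (g : X → ℝ) (δ : κ → ℤˣ) (x : X) :
    ∑ A, (∏ i ∈ A, δ i) • fourierCoeff A g x = 2 ^ Fintype.card κ * g (δ • x) := by
  simp only [fourierCoeff, Finset.smul_sum, smul_smul, ← Finset.prod_mul_distrib]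
  rw [Finset.sum_comm, Finset.sum_eq_single δ]
  · simp [Int.units_mul_self]
  · intro ε _ hε
    have : δ * ε ≠ 1 := fun h => hε <| funext fun i =>
      (Int.units_inv_eq_self _).symm.trans (inv_eq_of_mul_eq_one_left (congrFun h i))
    simp only [Units.smul_def, ← Finset.sum_smul]
    rw [show (∑ A : Finset κ, ((∏ i ∈ A, δ i * ε i : ℤˣ) : ℤ)) = 0 from
      sum_prod_units_eq_zero this, zero_smul]
  · exact fun h => absurd (Finset.mem_univ δ) h

lemma eq_of_fourierCoeff_eq_zero {g : X → ℝ} {x : X}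
    (h : ∀ A : Finset κ, A.Nonempty → fourierCoeff A g x = 0) (δ : κ → ℤˣ) :
    g (δ • x) = g x := by
  have value (δ : κ → ℤˣ) : 2 ^ Fintype.card κ * g (δ • x) = fourierCoeff (∅ : Finset κ) g x := by
    rw [← sum_smul_fourierCoeff, Finset.sum_eq_single ∅]
    · rw [Finset.prod_empty, one_smul]
    · intro A _ hA
      rw [h A (Finset.nonempty_iff_ne_empty.2 hA), smul_zero]
    · exact fun h => absurd (Finset.mem_univ _) h
  have := (value δ).trans (value 1).symm
  rw [one_smul] at this
  exact mul_left_cancel₀ (by positivity) this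

end Fourier

/-- The characters with largest index `i` are as many as the dimension of the `i`-th sphere. -/
lemma exists_constant_orbit_fin {k : ℕ} {g : (∀ i : Fin k, UnitSphere (2 ^ (i : ℕ))) → ℝ}
    (hg : Continuous g) : ∃ x, ∀ ε : Fin k → ℤˣ, g (ε • x) = g x := by
  let enum (i : Fin k) : (Finset.Iio i).powerset ≃ Fin (2 ^ (i : ℕ)) :=
    Finset.equivFinOfCardEq (by rw [Finset.card_powerset, Fin.card_Iio])
  let A (a : Σ i : Fin k, Fin (2 ^ (i : ℕ))) : Finset (Fin k) := insert a.1 ((enum a.1).symm a.2).1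
  have hA (a) (i) (hi : i ∈ A a) : i ≤ a.1 := by
    rcases Finset.mem_insert.1 hi with rfl | hi
    · exact le_rfl
    · exact (Finset.mem_Iio.1 (Finset.mem_powerset.1 ((enum a.1).symm a.2).2 hi)).le
  have hsurj (S : Finset (Fin k)) (hS : S.Nonempty) : ∃ a, A a = S := by
    have hlt : S.erase (S.max' hS) ⊆ Finset.Iio (S.max' hS) := fun i hi =>
      Finset.mem_Iio.2 (S.lt_max'_of_mem_erase_max' hS hi)
    refine ⟨⟨S.max' hS, enum _ ⟨_, Finset.mem_powerset.2 hlt⟩⟩, ?_⟩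
    simp only [A, Equiv.symm_apply_apply, Finset.insert_erase (S.max'_mem hS)]
  have hcont : Continuous fun x a => fourierCoeff (A a) g x :=
    continuous_pi fun a => continuous_finsetSum _ fun ε _ =>
      (hg.comp (continuous_const_smul ε)).const_smul _
  obtain ⟨x, hx⟩ := exists_eq_zero_of_prod_unitSphere (A := A)
    (fun a => Finset.mem_insert_self _ _) hA hcont fun ε x a => fourierCoeff_smul (A a) g ε x
  refine ⟨x, eq_of_fourierCoeff_eq_zero fun S hS => ?_⟩
  obtain ⟨a, rfl⟩ := hsurj S hS
  exact congrFun hx a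

/-- The product of the spheres of dimensions `1, 2, 4, 8, …`, with the antipodal action on each
factor. -/
abbrev SphereProduct : Type := ∀ i : ℕ, UnitSphere (2 ^ i)

lemma exists_eq_on_truncated_orbit {g : SphereProduct → ℝ} (hg : Continuous g) (k : ℕ) :
    ∃ x, ∀ ε : ℕ → ℤˣ, (∀ i ≥ k, ε i = 1) → g (ε • x) = g x := by
  let extend (x : ∀ i : Fin k, UnitSphere (2 ^ (i : ℕ))) : SphereProduct :=
    fun i => if h : i < k then x ⟨i, h⟩ else toUnitSphere 0
  have hextend : Continuous extend := continuous_pi fun i => by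
    by_cases h : i < k
    · simpa only [extend, dif_pos h] using continuous_apply _
    · simpa only [extend, dif_neg h] using continuous_const
  obtain ⟨x, hx⟩ := exists_constant_orbit_fin (hg.comp hextend)
  refine ⟨extend x, fun ε hε => (congrArg g ?_).trans (hx fun i => ε i)⟩
  funext i
  by_cases h : i < k
  · simp only [extend, Pi.smul_apply', dif_pos h]
  · simp only [extend, Pi.smul_apply', dif_neg h, hε i (not_lt.1 h), one_smul]

theorem exists_constant_orbit {g : SphereProduct → ℝ} (hg : Continuous g) :
    ∃ x, ∀ ε : ℕ → ℤˣ, g (ε • x) = g x := by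
  let K (k : ℕ) : Set SphereProduct :=
    {x | ∀ ε : ℕ → ℤˣ, (∀ i ≥ k, ε i = 1) → g (ε • x) = g x}
  have hclosed (k) : IsClosed (K k) := by
    simp only [K, Set.ofPred_forall]
    exact isClosed_iInter fun ε => isClosed_iInter fun _ =>
      isClosed_eq (hg.comp (continuous_const_smul ε)) hg
  obtain ⟨x, hx⟩ := IsCompact.nonempty_iInter_of_sequence_nonempty_isCompact_isClosed K
    (fun k x hx ε hε => hx ε fun i hi => hε i (Nat.le_of_succ_le hi))
    (exists_eq_on_truncated_orbit hg) (hclosed 0).isCompact hclosed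
  rw [Set.mem_iInter] at hx
  refine ⟨x, fun ε => ?_⟩
  have htrunc : Filter.Tendsto (fun k i => if i < k then ε i else 1) Filter.atTop (nhds ε) :=
    tendsto_pi_nhds.2 fun i => tendsto_const_nhds.congr' <|
      (Filter.eventually_gt_atTop i).mono fun k hk => (if_pos hk).symm
  have hsmul : Continuous fun ε : ℕ → ℤˣ => g (ε • x) :=
    hg.comp (continuous_id.smul continuous_const)
  refine tendsto_nhds_unique ((hsmul.tendsto ε).comp htrunc) ?_
  exact tendsto_const_nhds.congr fun k => (hx k _ fun i hi => if_neg hi.not_gt).symm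

end ConstantOrbits

section Orbits

lemma smul_unitSphere_left_injective {d : ℕ} (x : UnitSphere d) :
    Function.Injective fun ε : ℤˣ => ε • x := by
  have hneg : (1 : ℤˣ) • x.1 ≠ (-1 : ℤˣ) • x.1 := by
    rw [Units.neg_smul, one_smul]
    exact fun h => ne_neg_of_mem_unit_sphere ℝ (x : Metric.sphere _ _) (Subtype.ext h)
  intro ε δ h
  have h : ε • x.1 = δ • x.1 := congrArg Subtype.val h
  rcases Int.units_eq_one_or ε with rfl | rfl <;> rcases Int.units_eq_one_or δ with rfl | rfl
  · rfl
  · exact absurd h hneg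
  · exact absurd h.symm hneg
  · rfl

lemma smul_sphereProduct_left_injective (x : SphereProduct) :
    Function.Injective fun ε : ℕ → ℤˣ => ε • x := fun _ _ h =>
  funext fun i => smul_unitSphere_left_injective (x i) (congrFun h i)

instance : ProperSMul (ℕ → ℤˣ) SphereProduct where
  isProperMap_smul_pair := (by fun_prop : Continuous _).isProperMap

/-- The orbit space of the product of spheres. -/
abbrev SphereOrbits : Type := MulAction.orbitRel.Quotient (ℕ → ℤˣ) SphereProduct

instance : SecondCountableTopology SphereOrbits :=
  ContinuousConstSMul.secondCountableTopology

/-- The projection onto the orbit space. -/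
noncomputable def toOrbit : SphereProduct → SphereOrbits := Quotient.mk _

lemma continuous_toOrbit : Continuous toOrbit := continuous_quotient_mk'

lemma isOpenMap_toOrbit : IsOpenMap toOrbit := isOpenMap_quotient_mk'_mul

lemma surjective_toOrbit : Function.Surjective toOrbit := Quotient.mk_surjective

lemma toOrbit_eq_iff {x y : SphereProduct} :
    toOrbit x = toOrbit y ↔ ∃ ε : ℕ → ℤˣ, ε • y = x :=
  Quotient.eq.trans MulAction.orbitRel_apply

lemma infinite_fiber_toOrbit (y : SphereOrbits) : (toOrbit ⁻¹' {y}).Infinite := by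
  have : Nontrivial ℤˣ := ⟨1, -1, by decide⟩
  have : Infinite (ℕ → ℤˣ) := Function.infinite_of_left
  obtain ⟨x, rfl⟩ := surjective_toOrbit y
  exact Set.infinite_of_injective_forall_mem (smul_sphereProduct_left_injective x) fun ε =>
    toOrbit_eq_iff.2 ⟨ε, rfl⟩

/-- Points with different nonnegative first coordinates are not antipodal. -/
instance : Infinite SphereOrbits := by
  have : Infinite (Set.Icc (0 : ℝ) 1) := Set.Icc.infinite zero_lt_one
  let p (t : Set.Icc (0 : ℝ) 1) : SphereProduct := fun _ => toUnitSphere fun _ => Real.arccos t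
  have hp (t) : (p t 0).1 0 = t := by
    change (Real.arccos t : Real.Angle).cos = t
    rw [Real.Angle.cos_coe, Real.cos_arccos (by linarith [t.2.1]) t.2.2]
  refine Infinite.of_injective (toOrbit ∘ p) fun s t hst => Subtype.ext ?_
  obtain ⟨ε, hε⟩ := toOrbit_eq_iff.1 hst
  have h : ε 0 • (t : ℝ) = s := by
    rw [← hp s, ← hε, ← hp t]
    rfl
  have := s.2.1
  have := t.2.1
  rcases Int.units_eq_one_or (ε 0) with h1 | h1 <;> rw [h1] at h
  · rw [← h, one_smul]
  · rw [Units.neg_smul, one_smul] at h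
    linarith

lemma exists_eq_const_on_fiber_toOrbit {g : SphereProduct → ℝ} (hg : Continuous g) :
    ∃ y, ∃ c, ∀ x, toOrbit x = y → g x = c := by
  obtain ⟨x, hx⟩ := exists_constant_orbit hg
  refine ⟨toOrbit x, g x, fun z hz => ?_⟩
  obtain ⟨ε, rfl⟩ := toOrbit_eq_iff.1 hz
  exact hx ε

end Orbits

end OrbitSpace

/-- There exist infinite compact metrizable spaces `X`, `Y` and a continuous
open surjection `f : X → Y` all of whose fibers are infinite, such that the induced map
`I(f) : I(X) → I(Y)` is not a trivial `Q`-bundle: there is no homeomorphism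
`H : I(X) ≃ I(Y) × Q` with `pr₁ ∘ H = I(f)`, where `Q = ∏_{i=1}^∞ [0, 1]` is the
Hilbert cube. -/
theorem statement14 :
    ∃ (X Y : Type) (tX : TopologicalSpace X) (tY : TopologicalSpace Y) (f : X → Y)
      (hf : @Continuous X Y tX tY f),
      @CompactSpace X tX ∧ @TopologicalSpace.MetrizableSpace X tX ∧ Infinite X ∧
      @CompactSpace Y tY ∧ @TopologicalSpace.MetrizableSpace Y tY ∧ Infinite Y ∧
      @IsOpenMap X Y tX tY f ∧ Function.Surjective f ∧
      (∀ y : Y, (f ⁻¹' {y}).Infinite) ∧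
      ¬ ∃ H : @IdemMeasure X tX ≃ₜ (@IdemMeasure Y tY × (ℕ → Set.Icc (0 : ℝ) 1)),
          ∀ μ : @IdemMeasure X tX,
            ((H μ).1).val = @pushF X Y tX tY ⟨f, hf⟩ μ.val := by
  refine ⟨OrbitSpace.SphereProduct, OrbitSpace.SphereOrbits, inferInstance, inferInstance,
    OrbitSpace.toOrbit, OrbitSpace.continuous_toOrbit, inferInstance, inferInstance,
    Infinite.of_surjective _ OrbitSpace.surjective_toOrbit, inferInstance, inferInstance,
    inferInstance, OrbitSpace.isOpenMap_toOrbit, OrbitSpace.surjective_toOrbit,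
    OrbitSpace.infinite_fiber_toOrbit, ?_⟩
  exact IdemMeasure.not_exists_trivialization OrbitSpace.surjective_toOrbit fun _ hg =>
    OrbitSpace.exists_eq_const_on_fiber_toOrbit hg
end
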